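/- arXiv:2512.00197 — 15 statements merged into one kernel-verified Lean document; each statement's English description precedes it below -/
import Mathlib

section
/- Let n ≥ 1, let C ⊆ ℝ^n be a sharp open convex cone, and let Γ be a subgroup of GL(n,ℝ) such that every γ ∈ Γ satisfies |det γ| = 1 and γ · C = C. Then for every x ∈ C and every linear functional α ∈ (ℝ^n)* with α(y) < 0 for all y ∈ closure(C) \ {0}, the function γ ↦ α(γ · x) on Γ tends to −∞ as ‖γ‖ → ∞ within Γ; formally, it tends to −∞ along the pullback (comap) under γ ↦ ‖γ‖ of the atTop filter, where ‖·‖ is a norm on the n×n real matrices. -/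
attribute [local instance] Matrix.normedAddCommGroup

/-!
A functional `φ` that is positive on a closed cone minus the origin controls the norm there:
`‖y‖ ≤ c * φ y`. If `T` maps the ball of radius `r` around `x` into the cone, this bound holds at
`T (x + r • v)` and at `T (x - r • v)` for every unit vector `v`, and adding the two gives
`r * ‖T v‖ ≤ c * φ (T x)`, since the terms in `φ (T v)` cancel. Hence `‖T‖ ≤ (c / r) * φ (T x)`.
-/

open Filter Metric Set Topology

theorem norm_le_opNorm_mulVecLin {m n 𝕜 : Type*} [Fintype m] [Fintype n]
    [NontriviallyNormedField 𝕜] [CompleteSpace 𝕜] (A : Matrix m n 𝕜) :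
    ‖A‖ ≤ ‖A.mulVecLin.toContinuousLinearMap‖ := by
  classical
  refine (Matrix.norm_le_iff (norm_nonneg _)).2 fun i j => ?_
  calc ‖A i j‖ = ‖A.mulVecLin.toContinuousLinearMap (Pi.single j 1) i‖ := by simp
    _ ≤ ‖A.mulVecLin.toContinuousLinearMap (Pi.single j 1)‖ := norm_le_pi_norm _ i
    _ ≤ ‖A.mulVecLin.toContinuousLinearMap‖ :=
      ContinuousLinearMap.unit_le_opNorm _ _ (by simp [Pi.norm_single])

section NormedSpace

variable {E F : Type*} [SeminormedAddCommGroup E] [NormedSpace ℝ E]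
  [NormedAddCommGroup F] [NormedSpace ℝ F]

theorem exists_norm_le_mul_of_pos_on_cone [ProperSpace F] {K : Set F} (hK : IsClosed K)
    (hsmul : ∀ t : ℝ, 0 < t → ∀ y ∈ K, t • y ∈ K) {φ : F →L[ℝ] ℝ}
    (hφ : ∀ y ∈ K \ {0}, 0 < φ y) :
    ∃ c : ℝ, 0 < c ∧ ∀ y ∈ K, ‖y‖ ≤ c * φ y := by
  have hcompact : IsCompact (K ∩ sphere 0 1) := (isCompact_sphere 0 1).inter_left hK
  obtain ⟨δ, hδ, hδφ⟩ : ∃ δ, 0 < δ ∧ ∀ y ∈ K ∩ sphere 0 1, δ ≤ φ y :=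
    hcompact.exists_forall_le' φ.continuous.continuousOn fun y hy =>
      hφ y ⟨hy.1, ne_zero_of_mem_unit_sphere ⟨y, hy.2⟩⟩
  refine ⟨δ⁻¹, inv_pos.2 hδ, fun y hy => ?_⟩
  rcases eq_or_ne y 0 with rfl | hy0
  · simp
  have hnorm : 0 < ‖y‖ := norm_pos_iff.2 hy0
  have hunit : δ ≤ ‖y‖⁻¹ * φ y := by
    simpa using hδφ (‖y‖⁻¹ • y)
      ⟨hsmul _ (inv_pos.2 hnorm) y hy, by simp [norm_smul, hnorm.ne']⟩
  rwa [le_inv_mul_iff₀ hδ, mul_comm, ← le_inv_mul_iff₀ hnorm]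

theorem opNorm_le_div_of_norm_le_on_closedBall {G : Type*} [SeminormedAddCommGroup G]
    [NormedSpace ℝ G] {T : E →L[ℝ] G} {ψ : E →ₗ[ℝ] ℝ} {x : E} {r : ℝ} (hr : 0 < r)
    (h : ∀ y ∈ closedBall x r, ‖T y‖ ≤ ψ y) : ‖T‖ ≤ ψ x / r := by
  have hx : 0 ≤ ψ x := (norm_nonneg _).trans (h x (mem_closedBall_self hr.le))
  refine T.opNorm_le_of_unit_norm (div_nonneg hx hr.le) fun v hv => ?_
  have hadd : ‖T (x + r • v)‖ ≤ ψ x + r * ψ v := by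
    simpa using h (x + r • v) (by simp [norm_smul, hv, abs_of_pos hr])
  have hsub : ‖T (x - r • v)‖ ≤ ψ x - r * ψ v := by
    simpa using h (x - r • v) (by simp [norm_smul, hv, abs_of_pos hr])
  have hdouble : 2 * (r * ‖T v‖) ≤ 2 * ψ x :=
    calc 2 * (r * ‖T v‖) = ‖T (x + r • v) - T (x - r • v)‖ := by
          rw [← map_sub, add_sub_sub_cancel, ← two_smul ℝ, map_smul, map_smul, norm_smul, norm_smul,
            Real.norm_of_nonneg hr.le, Real.norm_two]
      _ ≤ ‖T (x + r • v)‖ + ‖T (x - r • v)‖ := norm_sub_le _ _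
      _ ≤ 2 * ψ x := by linarith
  rw [le_div_iff₀' hr]
  linarith

theorem stmt_0_general [ProperSpace F] {S : Set E} {x : E} (hS : S ∈ 𝓝 x) {K : Set F}
    (hK : IsClosed K) (hsmul : ∀ t : ℝ, 0 < t → ∀ y ∈ K, t • y ∈ K) {α : F →L[ℝ] ℝ}
    (hα : ∀ y ∈ K \ {0}, α y < 0) {ι : Type*} {l : Filter ι} {T : ι → E →L[ℝ] F}
    (hmaps : ∀ᶠ i in l, MapsTo (T i) S K) (hT : Tendsto (fun i => ‖T i‖) l atTop) :
    Tendsto (fun i => α (T i x)) l atBot := by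
  obtain ⟨c, hc, hcα⟩ := exists_norm_le_mul_of_pos_on_cone hK hsmul (φ := -α)
    fun y hy => neg_pos.2 (hα y hy)
  obtain ⟨r, hr, hball⟩ := nhds_basis_closedBall.mem_iff.1 hS
  have hbound : ∀ᶠ i in l, ‖T i‖ ≤ c / r * -α (T i x) := by
    filter_upwards [hmaps] with i hi
    rw [div_mul_eq_mul_div]
    exact opNorm_le_div_of_norm_le_on_closedBall (ψ := c • (-α).comp (T i)) hr
      fun y hy => hcα _ (hi (hball hy))
  rw [← tendsto_neg_atTop_iff, ← tendsto_const_mul_atTop_of_pos (div_pos hc hr)]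
  exact tendsto_atTop_mono' l hbound hT

end NormedSpace

/-- for a sharp open convex cone `C` preserved by a subgroup `Γ` of
`GL(n,ℝ)` consisting of matrices with `|det| = 1`, for any `x ∈ C` and any linear
functional `α` negative on `closure C \ {0}`, the matrix coefficient
`γ ↦ α (γ · x)` tends to `-∞` as `‖γ‖ → ∞` within `Γ`. -/
theorem stmt_0 (n : ℕ) (hn : 1 ≤ n) (C : Set (Fin n → ℝ))
    (hCne : C.Nonempty) (hCopen : IsOpen C) (hCconv : Convex ℝ C)
    (hCcone : ∀ t : ℝ, 0 < t → ∀ x ∈ C, t • x ∈ C)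
    (hCsharp : ¬ ∃ x v : Fin n → ℝ, v ≠ 0 ∧ ∀ t : ℝ, x + t • v ∈ closure C)
    (Γ : Subgroup (Matrix.GeneralLinearGroup (Fin n) ℝ))
    (hdet : ∀ γ ∈ Γ, |Matrix.det ((γ : Matrix.GeneralLinearGroup (Fin n) ℝ) :
      Matrix (Fin n) (Fin n) ℝ)| = 1)
    (hinv : ∀ γ ∈ Γ, (fun v => Matrix.mulVec ((γ : Matrix.GeneralLinearGroup (Fin n) ℝ) :
      Matrix (Fin n) (Fin n) ℝ) v) '' C = C)
    (x : Fin n → ℝ) (hx : x ∈ C)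
    (α : (Fin n → ℝ) →ₗ[ℝ] ℝ) (hα : ∀ y ∈ closure C \ {0}, α y < 0) :
    Filter.Tendsto
      (fun γ : Γ => α (Matrix.mulVec (((γ : Matrix.GeneralLinearGroup (Fin n) ℝ)) :
        Matrix (Fin n) (Fin n) ℝ) x))
      (Filter.comap
        (fun γ : Γ => ‖(((γ : Matrix.GeneralLinearGroup (Fin n) ℝ)) :
          Matrix (Fin n) (Fin n) ℝ)‖) Filter.atTop)
      Filter.atBot :=
  stmt_0_general (α := α.toContinuousLinearMap)
    (T := fun γ : Γ => (Matrix.mulVecLin γ.1.1).toContinuousLinearMap)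
    (hS := hCopen.mem_nhds hx) (hK := isClosed_closure)
    (hsmul := fun t ht => MapsTo.closure (hCcone t ht) (continuous_const_smul t)) (hα := hα)
    (hmaps := .of_forall fun γ _ hy => subset_closure (hinv γ γ.2 ▸ mem_image_of_mem _ hy))
    (hT := tendsto_atTop_mono (fun γ => norm_le_opNorm_mulVecLin γ.1.1) tendsto_comap)
end

section
/- Let n ≥ 1 and let Γ be a subgroup of GL(n,ℝ). Suppose there exist a nonempty open set U ⊆ ℝ^n and a nonempty open set V ⊆ (ℝ^n)* such that for every x ∈ U and α ∈ V one has α(γ · x) > 0 for all γ ∈ Γ, and the function γ ↦ α(γ · x) tends to +∞ along the cocompact filter of Γ (Γ carrying the subspace topology from the n×n real matrices). Then there exists a sharp open convex cone C ⊆ ℝ^n with γ · C = C for every γ ∈ Γ. -/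
/-!
The vectors `x` with `0 ≤ α (γ • x)` for all `γ ∈ Γ` and `α ∈ V` form a closed `Γ`-invariant convex
cone containing `U`, and its interior is the required cone. A functional that is nonnegative on a
line kills the direction of the line, so the direction of a line in the cone is killed by `V`; as
`V` is open, it spans the dual, and the direction is zero.
-/

theorem apply_eq_zero_of_forall_le_apply_add_smul {𝕜 E : Type*} [Field 𝕜] [LinearOrder 𝕜]
    [IsStrictOrderedRing 𝕜] [AddCommGroup E] [Module 𝕜 E] {f : Module.Dual 𝕜 E} {c : 𝕜} {x v : E}
    (h : ∀ t : 𝕜, c ≤ f (x + t • v)) : f v = 0 := by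
  by_contra hv
  have hlow : f (x + ((c - 1 - f x) / f v) • v) = c - 1 := by
    rw [map_add, map_smul, smul_eq_mul, div_mul_cancel₀ _ hv, add_sub_cancel]
  linarith [h ((c - 1 - f x) / f v)]

theorem eq_zero_of_forall_apply_eq_zero_of_nonempty_interior {𝕜 E : Type*}
    [NontriviallyNormedField 𝕜] [AddCommGroup E] [Module 𝕜 E] [TopologicalSpace E]
    [SeparatingDual 𝕜 E] {V : Set (StrongDual 𝕜 E)}
    (hV : (interior V).Nonempty) {v : E} (h : ∀ α ∈ V, α v = 0) : v = 0 := by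
  let annihilator : Submodule 𝕜 (StrongDual 𝕜 E) := ((topDualPairing 𝕜 E).flip v).ker
  have hVle : V ⊆ annihilator := h
  have htop : annihilator = ⊤ :=
    annihilator.eq_top_of_nonempty_interior' (hV.mono (interior_mono hVle))
  refine SeparatingDual.eq_zero_of_forall_dual_eq_zero (R := 𝕜) fun α => ?_
  exact (htop ▸ Submodule.mem_top : α ∈ annihilator)

section InvariantDualCone

variable {M E : Type*} [Monoid M] [AddCommGroup E] [Module ℝ E] [TopologicalSpace E]
  [DistribMulAction M E] [SMulCommClass M ℝ E]

variable (M) in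
/-- The cone of vectors whose whole `M`-orbit is nonnegative under every functional in `V`; it is
the largest `M`-invariant subset of the dual cone of `V`. -/
def invariantDualCone (V : Set (StrongDual ℝ E)) : PointedCone ℝ E :=
  ⨅ g : M, (PointedCone.dual (topDualPairing ℝ E) V).comap (DistribSMul.toLinearMap ℝ E g)

namespace invariantDualCone

variable {V : Set (StrongDual ℝ E)}

theorem mem_iff {x : E} : x ∈ invariantDualCone M V ↔ ∀ g : M, ∀ α ∈ V, 0 ≤ α (g • x) := by
  simp [invariantDualCone]

theorem isClosed [ContinuousConstSMul M E] : IsClosed (invariantDualCone M V : Set E) := by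
  rw [invariantDualCone, Submodule.coe_iInf]
  exact isClosed_iInter fun g =>
    (PointedCone.isClosed_dual fun α => α.continuous).preimage (continuous_const_smul g)

theorem eq_zero_of_forall_add_smul_mem [SeparatingDual ℝ E] (hV : (interior V).Nonempty) {x v : E}
    (h : ∀ t : ℝ, x + t • v ∈ invariantDualCone M V) : v = 0 := by
  refine eq_zero_of_forall_apply_eq_zero_of_nonempty_interior hV fun α hα => ?_
  refine apply_eq_zero_of_forall_le_apply_add_smul (f := α.toLinearMap) (c := 0) (x := x)
    fun t => ?_
  have hnonneg := mem_iff.1 (h t) 1 α hα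
  rwa [one_smul] at hnonneg

open scoped Pointwise in
theorem smul_eq {G : Type*} [Group G] [DistribMulAction G E] [SMulCommClass G ℝ E] (g : G) :
    g • (invariantDualCone G V : Set E) = invariantDualCone G V := by
  ext x
  simp only [Set.mem_smul_set_iff_inv_smul_mem, SetLike.mem_coe, mem_iff, smul_smul]
  exact (Equiv.mulRight g⁻¹).forall_congr fun _ => Iff.rfl

end invariantDualCone

end InvariantDualCone

open scoped Pointwise in
theorem stmt_1_general {G E : Type*} [Group G] [AddCommGroup E] [Module ℝ E] [TopologicalSpace E]
    [IsTopologicalAddGroup E] [ContinuousConstSMul ℝ E] [SeparatingDual ℝ E]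
    [DistribMulAction G E] [SMulCommClass G ℝ E] [ContinuousConstSMul G E]
    {U : Set E} (hU : (interior U).Nonempty)
    {V : Set (StrongDual ℝ E)} (hV : (interior V).Nonempty)
    (h : ∀ x ∈ U, ∀ α ∈ V, ∀ g : G, 0 ≤ α (g • x)) :
    ∃ C : Set E, C.Nonempty ∧ IsOpen C ∧ Convex ℝ C ∧
      (∀ t : ℝ, 0 < t → ∀ x ∈ C, t • x ∈ C) ∧
      (¬ ∃ x v : E, v ≠ 0 ∧ ∀ t : ℝ, x + t • v ∈ closure C) ∧
      (∀ g : G, g • C = C) := by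
  let K := invariantDualCone G V
  have hUK : U ⊆ K := fun x hx => invariantDualCone.mem_iff.2 fun g α hα => h x hx α hα g
  have hclosure : closure (interior (K : Set E)) ⊆ K :=
    invariantDualCone.isClosed.closure_interior_subset
  refine ⟨interior K, hU.mono (interior_mono hUK), isOpen_interior, K.convex.interior, ?_, ?_, ?_⟩
  · intro t ht
    exact (isOpenMap_smul₀ ht.ne').mapsTo_interior fun x hx => K.smul_mem ht.le hx
  · rintro ⟨x, v, hv, hline⟩
    exact hv (invariantDualCone.eq_zero_of_forall_add_smul_mem hV fun t => hclosure (hline t))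
  · intro g
    rw [← interior_smul, invariantDualCone.smul_eq]

/-- if a subgroup `Γ` of `GL(n,ℝ)` admits nonempty open sets
`U ⊆ ℝⁿ`, `V ⊆ (ℝⁿ)*` such that every matrix coefficient `γ ↦ α (γ · x)` with
`(x, α) ∈ U × V` is positive and tends to `+∞` along the cocompact filter of `Γ`
(with the subspace topology induced from the `n×n` matrices), then `Γ` preserves
a sharp open convex cone. -/
theorem stmt_1 (n : ℕ) (hn : 1 ≤ n)
    (Γ : Subgroup (Matrix.GeneralLinearGroup (Fin n) ℝ))
    (U : Set (Fin n → ℝ)) (hUne : U.Nonempty) (hUo : IsOpen U)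
    (V : Set ((Fin n → ℝ) →L[ℝ] ℝ)) (hVne : V.Nonempty) (hVo : IsOpen V)
    (h : ∀ x ∈ U, ∀ α ∈ V,
      (∀ γ : Γ, 0 < α (Matrix.mulVec ((γ : Matrix.GeneralLinearGroup (Fin n) ℝ) :
        Matrix (Fin n) (Fin n) ℝ) x)) ∧
      Filter.Tendsto
        (fun γ : Γ => α (Matrix.mulVec ((γ : Matrix.GeneralLinearGroup (Fin n) ℝ) :
          Matrix (Fin n) (Fin n) ℝ) x))
        (@Filter.cocompact Γ
          (TopologicalSpace.induced
            (fun γ : Γ => ((γ : Matrix.GeneralLinearGroup (Fin n) ℝ) :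
              Matrix (Fin n) (Fin n) ℝ)) inferInstance))
        Filter.atTop) :
    ∃ C : Set (Fin n → ℝ), C.Nonempty ∧ IsOpen C ∧ Convex ℝ C ∧
      (∀ t : ℝ, 0 < t → ∀ x ∈ C, t • x ∈ C) ∧
      (¬ ∃ x v : Fin n → ℝ, v ≠ 0 ∧ ∀ t : ℝ, x + t • v ∈ closure C) ∧
      (∀ γ ∈ Γ, (fun v => Matrix.mulVec ((γ : Matrix.GeneralLinearGroup (Fin n) ℝ) :
        Matrix (Fin n) (Fin n) ℝ) v) '' C = C) := by
  have : ContinuousConstSMul Γ (Fin n → ℝ) :=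
    ⟨fun _ => continuous_const.matrix_mulVec continuous_id⟩
  obtain ⟨C, hne, hopen, hconv, hcone, hsharp, hinv⟩ := stmt_1_general (G := Γ)
    (hUo.interior_eq.symm ▸ hUne) (hVo.interior_eq.symm ▸ hVne)
    fun x hx α hα γ => ((h x hx α hα).1 γ).le
  exact ⟨C, hne, hopen, hconv, hcone, hsharp, fun γ hγ => hinv ⟨γ, hγ⟩⟩
end

section
/- Let X be a topological space, f_1, …, f_s : X → ℝ, and λ ∈ ℝ^s. Suppose there exists ε > 0 such that every μ ∈ ℝ^s with |μ_i − λ_i| ≤ ε for all i belongs to Λ. Then F_λ and the function x ↦ ∑_i |f_i(x)| have the same order along the cocompact filter of X: each is big-O of the other along the cocompact filter of X. -/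
open Filter Asymptotics

/-!
Only the finitely many vertices of the `ε`-cube around `lam` matter. At each point `x`, subtracting
`ε` times the sign of `f i x` from `lam i` for every `i` gives a vertex `μ` with
`F_μ x = F_lam x - ε * ∑ i, |f i x|`. Which vertex this is depends on `x`, but since there are only
finitely many, all the `F_μ` at vertices are eventually nonnegative together.
-/

theorem isBigO_sum_smul_sum_norm {α ι 𝕜 E : Type*} [SeminormedRing 𝕜] [SeminormedAddCommGroup E]
    [Module 𝕜 E] [IsBoundedSMul 𝕜 E] (l : Filter α) (t : Finset ι) (a : ι → 𝕜) (f : ι → α → E) :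
    (fun x => ∑ i ∈ t, a i • f i x) =O[l] fun x => ∑ i ∈ t, ‖f i x‖ :=
  IsBigO.fun_sum fun i hi => IsBigO.const_smul_left
    (IsBigO.of_norm_le fun x =>
      Finset.single_le_sum (f := fun j => ‖f j x‖) (fun _ _ => norm_nonneg _) hi) (a i)

theorem finite_setOf_forall_abs_sub_eq {ι G : Type*} [Finite ι] [AddGroup G] [LinearOrder G]
    (a : ι → G) (ε : G) : {μ : ι → G | ∀ i, |μ i - a i| = ε}.Finite := by
  refine Set.Finite.pi' (t := fun i => {m | |m - a i| = ε}) fun i =>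
    (Set.toFinite {ε + a i, -ε + a i}).subset fun m hm => ?_
  exact (eq_or_eq_neg_of_abs_eq hm).imp eq_add_of_sub_eq eq_add_of_sub_eq

section OrderedRing

variable {R : Type*} [CommRing R] [LinearOrder R] [IsOrderedRing R]

theorem exists_abs_sub_eq_and_mul_eq_sub_mul_abs {ε : R} (hε : 0 ≤ ε) (a y : R) :
    ∃ m, |m - a| = ε ∧ m * y = a * y - ε * |y| := by
  rcases abs_choice y with hy | hy
  · exact ⟨a - ε, by rw [sub_sub_cancel_left, abs_neg, abs_of_nonneg hε], by rw [hy]; ring⟩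
  · exact ⟨a + ε, by rw [add_sub_cancel_left, abs_of_nonneg hε], by rw [hy]; ring⟩

theorem mul_sum_abs_le_sum_mul_of_forall_abs_sub_eq {ι : Type*} [Fintype ι] {ε : R} (hε : 0 ≤ ε)
    {a y : ι → R} (h : ∀ μ : ι → R, (∀ i, |μ i - a i| = ε) → 0 ≤ ∑ i, μ i * y i) :
    ε * ∑ i, |y i| ≤ ∑ i, a i * y i := by
  choose μ hμ hμy using fun i => exists_abs_sub_eq_and_mul_eq_sub_mul_abs hε (a i) (y i)
  rw [← sub_nonneg, Finset.mul_sum, ← Finset.sum_sub_distrib]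
  simpa only [hμy] using h μ hμ

theorem eventually_mul_sum_abs_le_sum_mul {α ι : Type*} [Fintype ι] {l : Filter α}
    {f : ι → α → R} {a : ι → R} {ε : R} (hε : 0 ≤ ε)
    (h : ∀ μ : ι → R, (∀ i, |μ i - a i| = ε) → ∀ᶠ x in l, 0 ≤ ∑ i, μ i * f i x) :
    ∀ᶠ x in l, ε * ∑ i, |f i x| ≤ ∑ i, a i * f i x := by
  have h_all := (eventually_all_finite (finite_setOf_forall_abs_sub_eq a ε)).mpr h
  exact h_all.mono fun x hx => mul_sum_abs_le_sum_mul_of_forall_abs_sub_eq hε hx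

end OrderedRing

theorem isBigO_of_eventually_mul_le {α : Type*} {l : Filter α} {g F : α → ℝ} {ε : ℝ} (hε : 0 < ε)
    (hg : ∀ᶠ x in l, 0 ≤ g x) (h : ∀ᶠ x in l, ε * g x ≤ F x) : g =O[l] F := by
  refine (isBigO_const_mul_left_iff hε.ne').mp (IsBigO.of_bound' ?_)
  filter_upwards [hg, h] with x hgx hx
  rw [Real.norm_of_nonneg (mul_nonneg hε.le hgx)]
  exact hx.trans (Real.le_norm_self _)

theorem stmt_2_general {α ι : Type*} [Fintype ι] {l : Filter α} {f : ι → α → ℝ} {a : ι → ℝ}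
    {ε : ℝ} (hε : 0 < ε)
    (h : ∀ μ : ι → ℝ, (∀ i, |μ i - a i| = ε) → ∀ᶠ x in l, 0 ≤ ∑ i, μ i * f i x) :
    (fun x => ∑ i, a i * f i x) =Θ[l] fun x => ∑ i, |f i x| :=
  ⟨isBigO_sum_smul_sum_norm l Finset.univ a f,
    isBigO_of_eventually_mul_le hε
      (Eventually.of_forall fun _ => Finset.sum_nonneg fun _ _ => abs_nonneg _)
      (eventually_mul_sum_abs_le_sum_mul hε.le h)⟩

/-- if `λ` has an `ε`-cube neighbourhood contained in
`Λ = {μ | F_μ := ∑ i, μ i * f i is bounded below and tends to +∞ along the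
cocompact filter}`, then `F_λ` and `x ↦ ∑ i |f i x|` have the same order along
the cocompact filter of `X`. -/
theorem stmt_2 (X : Type*) [TopologicalSpace X] (s : ℕ) (f : Fin s → X → ℝ)
    (lam : Fin s → ℝ)
    (hcube : ∃ ε > (0 : ℝ), ∀ μ : Fin s → ℝ, (∀ i, |μ i - lam i| ≤ ε) →
      (∃ c : ℝ, ∀ x : X, c ≤ ∑ i, μ i * f i x) ∧
      Tendsto (fun x : X => ∑ i, μ i * f i x) (cocompact X) atTop) :
    ((fun x : X => ∑ i, lam i * f i x) =O[cocompact X] fun x : X => ∑ i, |f i x|) ∧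
    ((fun x : X => ∑ i, |f i x|) =O[cocompact X] fun x : X => ∑ i, lam i * f i x) := by
  obtain ⟨ε, hε, h⟩ := hcube
  exact stmt_2_general hε fun μ hμ => (h μ fun i => (hμ i).le).2.eventually_ge_atTop 0
end

section
/- Let n ≥ 1, let Γ be a set of n×n real matrices with the subspace topology, and let U ⊆ ℝ^n and V ⊆ (ℝ^n)* be nonempty open sets such that for every (x, α) ∈ U × V the function γ ↦ α(γ · x) tends to +∞ along the cocompact filter of Γ. Then for every (x, α) ∈ U × V, the functions γ ↦ α(γ · x) and γ ↦ ‖γ‖ have the same order along the cocompact filter of Γ: each is big-O of the other (here ‖·‖ is a norm on the n×n real matrices). -/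
open Filter Asymptotics

attribute [local instance] Matrix.normedAddCommGroup

/-!
A bilinear form that is nonnegative at the four corners `(x ± e, y ± f)` satisfies
`|B e f| ≤ B x y`, because the values at opposite corners add up to `2 (B x y ± B e f)`.
Nonnegativity of the coefficients `α (T x)` near `(x, α)` thus makes the coefficient at `(x, α)`
dominate, up to the square of a scaling factor, the coefficient at any other pair. In finite
dimension finitely many coefficients control the norm; the opposite bound is continuity of the
coefficient in the operator.
-/

open scoped Topology

attribute [local instance] Matrix.normedSpace

theorem abs_apply_apply_le_of_nonneg_corners {R M N : Type*} [CommRing R] [LinearOrder R]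
    [IsStrictOrderedRing R] [AddCommGroup M] [Module R M] [AddCommGroup N] [Module R N]
    (B : M →ₗ[R] N →ₗ[R] R) {x e : M} {y f : N}
    (hpp : 0 ≤ B (x + e) (y + f)) (hpm : 0 ≤ B (x + e) (y - f))
    (hmp : 0 ≤ B (x - e) (y + f)) (hmm : 0 ≤ B (x - e) (y - f)) :
    |B e f| ≤ B x y := by
  simp only [map_add, map_sub, LinearMap.add_apply, LinearMap.sub_apply] at hpp hpm hmp hmm
  exact abs_le.2 ⟨by linarith, by linarith⟩

theorem isBigO_apply_apply_of_eventually_nonneg {ι M N : Type*} {l : Filter ι}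
    [AddCommGroup M] [Module ℝ M] [TopologicalSpace M] [ContinuousAdd M] [ContinuousSMul ℝ M]
    [AddCommGroup N] [Module ℝ N] [TopologicalSpace N] [ContinuousAdd N] [ContinuousSMul ℝ N]
    {B : ι → M →ₗ[ℝ] N →ₗ[ℝ] ℝ} {x : M} {y : N}
    (h : ∀ᶠ p in 𝓝 (x, y), ∀ᶠ i in l, 0 ≤ B i p.1 p.2) (e : M) (f : N) :
    (fun i => B i e f) =O[l] fun i => B i x y := by
  have near (e : M) (f : N) :
      ∀ᶠ r : ℝ in 𝓝[≠] 0, ∀ᶠ i in l, 0 ≤ B i (x + r • e) (y + r • f) := by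
    have hc : Tendsto (fun r : ℝ => (x + r • e, y + r • f)) (𝓝 0) (𝓝 (x, y)) :=
      Continuous.tendsto' (by fun_prop) _ _ (by simp)
    exact (hc.mono_left nhdsWithin_le_nhds).eventually h
  obtain ⟨r, hpp, hpm, hmp, hmm, hr⟩ := ((near e f).and <| (near e (-f)).and <|
    (near (-e) f).and <| (near (-e) (-f)).and self_mem_nhdsWithin).exists
  have scaled : (fun i => B i (r • e) (r • f)) =O[l] fun i => B i x y := by
    refine IsBigO.of_bound' ?_
    filter_upwards [hpp, hpm, hmp, hmm] with i hpp hpm hmp hmm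
    simp only [smul_neg, ← sub_eq_add_neg] at hpm hmp hmm
    exact (abs_apply_apply_le_of_nonneg_corners (B i) hpp hpm hmp hmm).trans (le_abs_self _)
  simpa only [map_smul, LinearMap.smul_apply, smul_eq_mul, isBigO_const_mul_left_iff hr]
    using scaled

section Asymptotics

variable {ι 𝕜 E F G : Type*} [NontriviallyNormedField 𝕜] [CompleteSpace 𝕜]
  [NormedAddCommGroup E] [NormedSpace 𝕜 E] [NormedAddCommGroup F] [NormedSpace 𝕜 F]
  [SeminormedAddCommGroup G] {l : Filter ι} {g : ι → G}

theorem isBigO_of_forall_clm_apply [FiniteDimensional 𝕜 F] {u : ι → F}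
    (h : ∀ α : F →L[𝕜] 𝕜, (fun i => α (u i)) =O[l] g) : u =O[l] g := by
  let φ := (Module.finBasis 𝕜 F).equivFunL
  have hφ : (fun i => φ (u i)) =O[l] g :=
    isBigO_pi.2 fun k => h (.proj (R := 𝕜) (φ := fun _ => 𝕜) k ∘L φ.toContinuousLinearMap)
  exact (φ.isBigO_comp_rev u l).trans hφ

theorem isBigO_clm_of_forall_apply [FiniteDimensional 𝕜 E] {T : ι → E →L[𝕜] F}
    (h : ∀ x, (fun i => T i x) =O[l] g) : T =O[l] g := by
  let b := Module.finBasis 𝕜 E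
  obtain ⟨C, -, hC⟩ := b.exists_opNorm_le (F := F)
  have hb : T =O[l] fun i k => T i (b k) :=
    .of_bound C <| .of_forall fun _ => hC (norm_nonneg _) (norm_le_pi_norm _)
  exact hb.trans (isBigO_pi.2 fun k => h (b k))

end Asymptotics

theorem stmt_3_general {ι E F : Type*} {l : Filter ι}
    [NormedAddCommGroup E] [NormedSpace ℝ E] [FiniteDimensional ℝ E]
    [NormedAddCommGroup F] [NormedSpace ℝ F] [FiniteDimensional ℝ F]
    {T : ι → E →L[ℝ] F} {x : E} {α : F →L[ℝ] ℝ}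
    (h : ∀ᶠ p in 𝓝 (x, α), ∀ᶠ i in l, 0 ≤ p.2 (T i p.1)) :
    (fun i => α (T i x)) =Θ[l] T := by
  let B (i : ι) : E →ₗ[ℝ] (F →L[ℝ] ℝ) →ₗ[ℝ] ℝ :=
    (ContinuousLinearMap.apply ℝ ℝ ∘L T i).toLinearMap₁₂
  have coeff_le : (fun i => α (T i x)) =O[l] T :=
    (α ∘L ContinuousLinearMap.apply ℝ F x).isBigO_comp T l
  have coeff_le_coeff (e : E) (β : F →L[ℝ] ℝ) :
      (fun i => β (T i e)) =O[l] fun i => α (T i x) :=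
    isBigO_apply_apply_of_eventually_nonneg (B := B) h e β
  exact ⟨coeff_le, isBigO_clm_of_forall_apply fun e =>
    isBigO_of_forall_clm_apply (coeff_le_coeff e)⟩

/-- if `Γ` is a set of `n×n` real matrices (with the subspace
topology) and `U`, `V` are nonempty open sets such that every matrix coefficient
`γ ↦ α (γ · x)`, `(x, α) ∈ U × V`, tends to `+∞` along the cocompact filter of
`Γ`, then each such matrix coefficient has the same order as `γ ↦ ‖γ‖` along the
cocompact filter of `Γ`. -/
theorem stmt_3 (n : ℕ) (hn : 1 ≤ n) (Γ : Set (Matrix (Fin n) (Fin n) ℝ))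
    (U : Set (Fin n → ℝ)) (hUne : U.Nonempty) (hUo : IsOpen U)
    (V : Set ((Fin n → ℝ) →L[ℝ] ℝ)) (hVne : V.Nonempty) (hVo : IsOpen V)
    (h : ∀ x ∈ U, ∀ α ∈ V,
      Tendsto (fun γ : Γ => α (Matrix.mulVec (γ : Matrix (Fin n) (Fin n) ℝ) x))
        (cocompact Γ) atTop) :
    ∀ x ∈ U, ∀ α ∈ V,
      ((fun γ : Γ => α (Matrix.mulVec (γ : Matrix (Fin n) (Fin n) ℝ) x)) =O[cocompact Γ]
        fun γ : Γ => ‖(γ : Matrix (Fin n) (Fin n) ℝ)‖) ∧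
      ((fun γ : Γ => ‖(γ : Matrix (Fin n) (Fin n) ℝ)‖) =O[cocompact Γ]
        fun γ : Γ => α (Matrix.mulVec (γ : Matrix (Fin n) (Fin n) ℝ) x)) := by
  intro x hx α hα
  let φ := (Matrix.toLin' (R := ℝ) (m := Fin n) (n := Fin n) ≪≫ₗ
    LinearMap.toContinuousLinearMap).toContinuousLinearEquiv
  have hpos : ∀ᶠ p in 𝓝 (x, α), ∀ᶠ γ : Γ in cocompact Γ, 0 ≤ p.2 (φ γ p.1) :=
    mem_of_superset (prod_mem_nhds (hUo.mem_nhds hx) (hVo.mem_nhds hα)) fun p hp =>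
      (h p.1 hp.1 p.2 hp.2).eventually_ge_atTop 0
  have hφ : (fun γ : Γ => φ γ) =Θ[cocompact Γ] fun γ : Γ => (γ : Matrix (Fin n) (Fin n) ℝ) :=
    ⟨φ.isBigO_comp _ _, φ.isBigO_comp_rev _ _⟩
  exact ((stmt_3_general hpos).trans hφ).norm_right
end

section
/- Let X be a topological space, f_1, …, f_s : X → ℝ, let λ, μ ∈ Λ and t ∈ (0,1). Then F_{tλ+(1−t)μ} and F_λ + F_μ have the same order along the cocompact filter of X: each of the functions x ↦ F_{tλ+(1−t)μ}(x) and x ↦ F_λ(x) + F_μ(x) is big-O of the other along the cocompact filter of X. -/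
open Filter Asymptotics

/-!
Along the filter `F_λ` and `F_μ` are eventually nonnegative, so each of them is dominated by any
combination of the two with positive weights; nothing cancels. Hence any two such combinations
dominate each other, and linearity of `λ ↦ F_λ` identifies `F_{tλ+(1−t)μ}` as one of them.
-/

section SolidNorm

variable {α E : Type*} [NormedAddCommGroup E] [Lattice E] [HasSolidNorm E] [IsOrderedAddMonoid E]
  {l : Filter α} {u v : α → E}

theorem isBigO_of_nonneg_of_le (hu : 0 ≤ᶠ[l] u) (huv : u ≤ᶠ[l] v) : u =O[l] v := by
  refine IsBigO.of_bound' ?_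
  filter_upwards [hu, huv] with x hux huvx
  exact norm_le_norm_of_abs_le_abs (abs_le_abs_of_nonneg hux huvx)

theorem isBigO_self_add_of_nonneg (hu : 0 ≤ᶠ[l] u) (hv : 0 ≤ᶠ[l] v) : u =O[l] (u + v) :=
  isBigO_of_nonneg_of_le hu (hv.mono fun _ hvx => le_add_of_nonneg_right hvx)

variable [NormedSpace ℝ E] [PosSMulMono ℝ E] {a b c d : ℝ}

theorem isBigO_smul_add_smul_of_nonneg (hu : 0 ≤ᶠ[l] u) (hv : 0 ≤ᶠ[l] v) (hc : 0 < c)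
    (hd : 0 < d) : (a • u + b • v) =O[l] (c • u + d • v) := by
  have hcu : 0 ≤ᶠ[l] c • u := hu.mono fun _ hux => smul_nonneg hc.le hux
  have hdv : 0 ≤ᶠ[l] d • v := hv.mono fun _ hvx => smul_nonneg hd.le hvx
  have hu_bound : u =O[l] (c • u + d • v) :=
    (isBigO_const_smul_left hc.ne').1 (isBigO_self_add_of_nonneg hcu hdv)
  have hv_bound : v =O[l] (c • u + d • v) :=
    (isBigO_const_smul_left hd.ne').1 (add_comm (d • v) _ ▸ isBigO_self_add_of_nonneg hdv hcu)
  exact (hu_bound.const_smul_left a).add (hv_bound.const_smul_left b)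

theorem isTheta_smul_add_smul_of_nonneg (hu : 0 ≤ᶠ[l] u) (hv : 0 ≤ᶠ[l] v) (ha : 0 < a)
    (hb : 0 < b) (hc : 0 < c) (hd : 0 < d) : (a • u + b • v) =Θ[l] (c • u + d • v) :=
  ⟨isBigO_smul_add_smul_of_nonneg hu hv hc hd, isBigO_smul_add_smul_of_nonneg hu hv ha hb⟩

theorem stmt_6_general {ι : Type*} [Fintype ι] {f : ι → α → E} {lam mu : ι → ℝ}
    (hlam : ∀ᶠ x in l, 0 ≤ ∑ i, lam i • f i x) (hmu : ∀ᶠ x in l, 0 ≤ ∑ i, mu i • f i x)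
    (ha : 0 < a) (hb : 0 < b) :
    (fun x => ∑ i, (a * lam i + b * mu i) • f i x) =Θ[l]
      fun x => (∑ i, lam i • f i x) + ∑ i, mu i • f i x := by
  have hTheta := isTheta_smul_add_smul_of_nonneg hlam hmu ha hb one_pos one_pos
  simpa only [add_smul, mul_smul, Finset.sum_add_distrib, Finset.smul_sum, one_smul,
    Pi.add_def, Pi.smul_def] using hTheta

end SolidNorm

/-- if `λ, μ ∈ Λ` (i.e. `F_λ` and `F_μ` are bounded below and tend
to `+∞` along the cocompact filter) and `t ∈ (0,1)`, then `F_{tλ+(1−t)μ}` and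
`F_λ + F_μ` have the same order along the cocompact filter of `X`. -/
theorem stmt_6 (X : Type*) [TopologicalSpace X] (s : ℕ) (f : Fin s → X → ℝ)
    (lam mu : Fin s → ℝ)
    (hlam : (∃ c : ℝ, ∀ x : X, c ≤ ∑ i, lam i * f i x) ∧
      Tendsto (fun x : X => ∑ i, lam i * f i x) (cocompact X) atTop)
    (hmu : (∃ c : ℝ, ∀ x : X, c ≤ ∑ i, mu i * f i x) ∧
      Tendsto (fun x : X => ∑ i, mu i * f i x) (cocompact X) atTop)
    (t : ℝ) (ht : t ∈ Set.Ioo (0 : ℝ) 1) :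
    ((fun x : X => ∑ i, (t * lam i + (1 - t) * mu i) * f i x) =O[cocompact X]
      fun x : X => (∑ i, lam i * f i x) + ∑ i, mu i * f i x) ∧
    ((fun x : X => (∑ i, lam i * f i x) + ∑ i, mu i * f i x) =O[cocompact X]
      fun x : X => ∑ i, (t * lam i + (1 - t) * mu i) * f i x) := by
  obtain ⟨ht₀, ht₁⟩ := ht
  have hTheta := stmt_6_general (hlam.2.eventually_ge_atTop 0) (hmu.2.eventually_ge_atTop 0)
    ht₀ (sub_pos.2 ht₁)
  exact ⟨hTheta.1, hTheta.2⟩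
end

section
/- Let C ⊆ ℝ^n be an open convex cone. Then C is sharp (its closure contains no affine line) if and only if its dual C* = {α ∈ (ℝ^n)* | α(x) < 0 for all x ∈ closure(C) \ {0}} is nonempty. -/
/-!
The closure `K` of `C` is a closed convex cone, and it contains a line in direction `v` if and
only if it contains both `v` and `-v`: rescaling `x + t • v ∈ K` by `t⁻¹` and letting `t → ∞`
gives `v ∈ K`. A functional negative on `K \ {0}` therefore excludes lines. Conversely, if
`x ∈ K` is nonzero then `-x ∉ K`, and Hahn–Banach separates `-x` from `K` by a functional which
is nonnegative on `K` and positive at `x`. Countably many of the open sets on which these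
functionals are positive cover `K \ {0}`, by separability, and a convergent positive combination
of the corresponding functionals is positive on all of `K \ {0}`.
-/

open Filter Topology TopologicalSpace

section TopologicalModule

variable {E : Type*} [TopologicalSpace E] [AddCommGroup E] [ContinuousAdd E] [Module ℝ E]
  [ContinuousSMul ℝ E]

theorem exists_properCone_coe_eq_closure {C : Set E} (hne : C.Nonempty) (hconv : Convex ℝ C)
    (hsmul : ∀ t : ℝ, 0 < t → ∀ x ∈ C, t • x ∈ C) :
    ∃ K : ProperCone ℝ E, (K : Set E) = closure C := by
  have hadd : ∀ x ∈ C, ∀ y ∈ C, x + y ∈ C := fun x hx y hy ↦ by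
    simpa [smul_smul] using hsmul 2 two_pos _
      (hconv hx hy (a := 1 / 2) (b := 1 / 2) (by norm_num) (by norm_num) (by norm_num))
  let D : ConvexCone ℝ E := ⟨C, fun t ht x hx ↦ hsmul t ht x hx, fun x hx y hy ↦ hadd x hx y hy⟩
  have hpointed : D.closure.Pointed := .of_nonempty_of_isClosed hne.closure isClosed_closure
  exact ⟨⟨D.closure.toPointedCone hpointed, isClosed_closure⟩, rfl⟩

theorem mem_properCone_of_forall_add_smul_mem {K : ProperCone ℝ E} {x v : E}
    (hray : ∀ t : ℝ, 0 < t → x + t • v ∈ K) : v ∈ K := by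
  have hlim : Tendsto (fun t : ℝ ↦ t⁻¹ • x + v) atTop (𝓝 v) := by
    simpa using ((tendsto_inv_atTop_zero (𝕜 := ℝ)).smul_const x).add_const v
  refine K.isClosed.mem_of_tendsto hlim ((eventually_gt_atTop 0).mono fun t ht ↦ ?_)
  simpa [smul_smul, ht.ne'] using K.smul_mem (hray t ht) (inv_nonneg.2 ht.le)

theorem salient_properCone_iff_not_exists_line (K : ProperCone ℝ E) :
    (K : ConvexCone ℝ E).Salient ↔ ¬ ∃ x v : E, v ≠ 0 ∧ ∀ t : ℝ, x + t • v ∈ K := by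
  constructor
  · rintro hK ⟨x, v, hv, hline⟩
    refine hK v (mem_properCone_of_forall_add_smul_mem fun t _ ↦ hline t) hv
      (mem_properCone_of_forall_add_smul_mem (x := x) fun t _ ↦ ?_)
    simpa using hline (-t)
  · intro hline v hv hv0 hneg
    refine hline ⟨0, v, hv0, fun t ↦ ?_⟩
    rw [zero_add]
    obtain ht | ht := le_total 0 t
    · exact K.smul_mem hv ht
    · simpa using K.smul_mem hneg (neg_nonneg.2 ht)

end TopologicalModule

section NormedSpace

variable {E : Type*} [SeminormedAddCommGroup E] [NormedSpace ℝ E]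

theorem exists_strongDual_pos_of_countable {ι : Type*} [Countable ι] (f : ι → StrongDual ℝ E) :
    ∃ g : StrongDual ℝ E, ∀ x, (∀ i, 0 ≤ f i x) → (∃ i, 0 < f i x) → 0 < g x := by
  obtain ⟨ε, hε, c, hεc, -⟩ := NNReal.exists_pos_sum_of_countable one_ne_zero ι
  let w (i : ι) : ℝ := ε i / (1 + ‖f i‖)
  have hw (i : ι) : 0 < w i := div_pos (hε i) (by positivity)
  have hnorm (i : ι) : ‖w i • f i‖ ≤ ε i := by
    rw [norm_smul, Real.norm_of_nonneg (hw i).le, div_mul_eq_mul_div, div_le_iff₀ (by positivity)]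
    gcongr
    exact le_add_of_nonneg_left zero_le_one
  have hsum : Summable fun i ↦ w i • f i :=
    .of_norm_bounded (NNReal.summable_coe.2 hεc.summable) hnorm
  refine ⟨∑' i, w i • f i, fun x hnonneg ⟨i, hi⟩ ↦ ?_⟩
  have heval : HasSum (fun i ↦ w i * f i x) ((∑' i, w i • f i) x) :=
    hsum.hasSum.mapL (ContinuousLinearMap.apply ℝ ℝ x)
  rw [← heval.tsum_eq]
  exact heval.summable.tsum_pos (fun j ↦ mul_nonneg (hw j).le (hnonneg j)) i (mul_pos (hw i) hi)

theorem exists_strongDual_pos_of_salient [SeparableSpace E] {K : ProperCone ℝ E}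
    (hK : (K : ConvexCone ℝ E).Salient) : ∃ g : StrongDual ℝ E, ∀ x ∈ K, x ≠ 0 → 0 < g x := by
  have := UniformSpace.secondCountable_of_separable E
  let D : Set (StrongDual ℝ E) := {f | ∀ x ∈ K, 0 ≤ f x}
  obtain ⟨T, hTD, hT, hcover⟩ := isOpen_biUnion_countable D (fun f ↦ {x | 0 < f x})
    fun f _ ↦ isOpen_lt continuous_const f.continuous
  have := hT.to_subtype
  obtain ⟨g, hg⟩ := exists_strongDual_pos_of_countable fun f : T ↦ f.1
  refine ⟨g, fun x hx hx0 ↦ hg x (fun f ↦ hTD f.2 x hx) ?_⟩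
  obtain ⟨f, hfD, hfx⟩ := K.hyperplane_separation_point (hK x hx hx0)
  have hmem : x ∈ ⋃ f ∈ T, {x | 0 < f x} :=
    hcover ▸ Set.mem_biUnion (show f ∈ D from hfD) (by simpa using hfx)
  simpa using hmem

theorem stmt_7_general [SeparableSpace E] {C : Set E} (hne : C.Nonempty) (hconv : Convex ℝ C)
    (hsmul : ∀ t : ℝ, 0 < t → ∀ x ∈ C, t • x ∈ C) :
    (¬ ∃ x v : E, v ≠ 0 ∧ ∀ t : ℝ, x + t • v ∈ closure C) ↔
      {α : E →ₗ[ℝ] ℝ | ∀ x ∈ closure C \ {0}, α x < 0}.Nonempty := by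
  obtain ⟨K, hK⟩ := exists_properCone_coe_eq_closure hne hconv hsmul
  simp only [← hK, SetLike.mem_coe]
  rw [← salient_properCone_iff_not_exists_line]
  constructor
  · intro hsal
    obtain ⟨g, hg⟩ := exists_strongDual_pos_of_salient hsal
    exact ⟨-g, fun x hx ↦ neg_neg_of_pos (hg x hx.1 hx.2)⟩
  · rintro ⟨α, hα⟩ x hx hx0 hneg
    have hpos : 0 < α x := by simpa using hα (-x) ⟨hneg, neg_ne_zero.2 hx0⟩
    exact hpos.not_gt (hα x ⟨hx, hx0⟩)

end NormedSpace

/-- an open convex cone `C ⊆ ℝⁿ` is sharp (its closure contains no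
affine line) iff its dual
`C* = {α | α x < 0 for all x ∈ closure C \ {0}}` is nonempty. -/
theorem stmt_7 (n : ℕ) (C : Set (Fin n → ℝ))
    (hCne : C.Nonempty) (hCopen : IsOpen C) (hCconv : Convex ℝ C)
    (hCcone : ∀ t : ℝ, 0 < t → ∀ x ∈ C, t • x ∈ C) :
    (¬ ∃ x v : Fin n → ℝ, v ≠ 0 ∧ ∀ t : ℝ, x + t • v ∈ closure C) ↔
      {α : (Fin n → ℝ) →ₗ[ℝ] ℝ | ∀ x ∈ closure C \ {0}, α x < 0}.Nonempty :=
  stmt_7_general hCne hCconv hCcone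
end

section
/- Let C ⊆ ℝ^n be a sharp open convex cone and let C* = {α ∈ (ℝ^n)* | α(x) < 0 for all x ∈ closure(C) \ {0}} be its dual. Then the bidual equals C: the set {x ∈ ℝ^n | α(x) < 0 for all α ∈ closure(C*) \ {0}} is equal to C, where the closure of C* is taken in the dual space (ℝ^n)* with its canonical (finite-dimensional) topology. -/
/-!
As soon as `C*` contains one functional `β`, its closure is the whole polar cone
`{α | α ≤ 0 on C}`: if `α` is nonpositive on `C`, then `α + t β ∈ C*` for every `t > 0`. The bidual
is then `C` for every nonempty open convex cone: a nonzero functional is an open map, so it is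
negative on `C` once it is nonpositive there, and Hahn–Banach supplies, for each `x ∉ C`, a nonzero
functional of the polar cone that is nonnegative at `x`.

Sharpness serves to find `β`. In a separable normed space, `closure C` is cut out by countably many
half-spaces `f n ≤ c n`, and each `f n` lies in the polar cone. A point of `closure C` at which all
`f n` vanish spans a line in `closure C`, so it is the origin, and a convergent series of positive
multiples of the `f n` is negative on the rest of `closure C`.
-/

open Filter Set TopologicalSpace
open scoped Topology

section Cone

variable {E : Type*} [AddCommGroup E] [Module ℝ E] [TopologicalSpace E]

/-- The polar cone of `C`: the continuous functionals that are nonpositive on `C`. -/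
def polarCone (C : Set E) : Set (StrongDual ℝ E) := {α | ∀ y ∈ C, α y ≤ 0}

/-- The dual `C*`: the continuous functionals that are negative on `closure C` away from the
origin. -/
def strictPolarCone (C : Set E) : Set (StrongDual ℝ E) := {α | ∀ y ∈ closure C \ {0}, α y < 0}

variable {C : Set E} {f : StrongDual ℝ E} {u : ℝ}

theorem polarCone_closure : polarCone (closure C) = polarCone C :=
  Subset.antisymm (fun _ hf y hy ↦ hf y (subset_closure hy)) fun f hf ↦
    closure_minimal hf (isClosed_le f.continuous continuous_const)

theorem mem_polarCone_of_forall_le (hcone : ∀ t : ℝ, 0 < t → ∀ x ∈ C, t • x ∈ C)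
    (hf : ∀ y ∈ C, f y ≤ u) : f ∈ polarCone C := by
  intro y hy
  by_contra! hpos
  obtain ⟨t, ht, hlt⟩ := exists_pos_lt_mul hpos u
  exact hlt.not_ge (by simpa using hf _ (hcone t ht y hy))

theorem nonneg_of_forall_cone_le (hne : C.Nonempty)
    (hcone : ∀ t : ℝ, 0 < t → ∀ x ∈ C, t • x ∈ C) (hf : ∀ y ∈ C, f y ≤ u) : 0 ≤ u := by
  obtain ⟨y, hy⟩ := hne
  by_contra! hneg
  obtain ⟨t, ht, hlt⟩ := exists_pos_mul_lt (neg_pos.2 hneg) (-f y)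
  have hle : t * f y ≤ u := by simpa using hf _ (hcone t ht y hy)
  linarith

theorem strictPolarCone_subset_polarCone : strictPolarCone C ⊆ polarCone C := by
  intro f hf y hy
  obtain rfl | hy0 := eq_or_ne y 0
  · exact (map_zero f).le
  · exact (hf y ⟨subset_closure hy, hy0⟩).le

variable [ContinuousSMul ℝ E]

theorem isClosed_polarCone : IsClosed (polarCone C) := by
  simp only [polarCone, ofPred_forall]
  exact isClosed_biInter fun y _ ↦ isClosed_le (continuous_eval_const y) continuous_const

theorem closure_strictPolarCone (hne : (strictPolarCone C).Nonempty) :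
    closure (strictPolarCone C) = polarCone C := by
  refine Subset.antisymm
    (closure_minimal strictPolarCone_subset_polarCone isClosed_polarCone) fun f hf ↦ ?_
  obtain ⟨β, hβ⟩ := hne
  have hlim : Tendsto (fun t : ℝ ↦ f + t • β) (𝓝[>] 0) (𝓝 f) := by
    have hcont : Continuous fun t : ℝ ↦ f + t • β := by fun_prop
    simpa using (hcont.tendsto 0).mono_left nhdsWithin_le_nhds
  refine mem_closure_of_tendsto hlim (eventually_mem_nhdsWithin.mono fun t ht y hy ↦ ?_)
  rw [← polarCone_closure] at hf
  exact add_neg_of_nonpos_of_neg (hf y hy.1) (mul_neg_of_pos_of_neg ht (hβ y hy))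

variable [IsTopologicalAddGroup E]

theorem neg_of_mem_polarCone (hopen : IsOpen C) (hf : f ∈ polarCone C) (hf0 : f ≠ 0) {x : E}
    (hx : x ∈ C) : f x < 0 := by
  have himage : f '' C ⊆ interior (Iic 0) :=
    interior_maximal (image_subset_iff.2 hf) (f.isOpenMap_of_ne_zero hf0 C hopen)
  rw [interior_Iic] at himage
  exact himage (mem_image_of_mem f hx)

theorem exists_mem_polarCone_nonneg_of_notMem (hne : C.Nonempty) (hopen : IsOpen C)
    (hconv : Convex ℝ C) (hcone : ∀ t : ℝ, 0 < t → ∀ x ∈ C, t • x ∈ C) {x : E} (hx : x ∉ C) :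
    ∃ f ∈ polarCone C \ {0}, 0 ≤ f x := by
  obtain ⟨f, hf⟩ := geometric_hahn_banach_open_point hconv hopen hx
  have hle : ∀ y ∈ C, f y ≤ f x := fun y hy ↦ (hf y hy).le
  refine ⟨f, ⟨mem_polarCone_of_forall_le hcone hle, ?_⟩, nonneg_of_forall_cone_le hne hcone hle⟩
  rintro rfl
  obtain ⟨y, hy⟩ := hne
  exact lt_irrefl _ (hf y hy)

theorem setOf_forall_polarCone_neg_eq (hne : C.Nonempty) (hopen : IsOpen C)
    (hconv : Convex ℝ C) (hcone : ∀ t : ℝ, 0 < t → ∀ x ∈ C, t • x ∈ C) :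
    {x | ∀ f ∈ polarCone C \ {0}, f x < 0} = C := by
  refine Subset.antisymm (fun x hx ↦ ?_) fun x hx f hf ↦ neg_of_mem_polarCone hopen hf.1 hf.2 hx
  by_contra hxC
  obtain ⟨f, hf, hfx⟩ := exists_mem_polarCone_nonneg_of_notMem hne hopen hconv hcone hxC
  exact (hx f hf).not_ge hfx

theorem exists_seq_polarCone_neg [LocallyConvexSpace ℝ E] [HereditarilyLindelofSpace E]
    (hconv : Convex ℝ C) (hcone : ∀ t : ℝ, 0 < t → ∀ x ∈ C, t • x ∈ C)
    (hsharp : ¬ ∃ x v : E, v ≠ 0 ∧ ∀ t : ℝ, x + t • v ∈ closure C) :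
    ∃ f : ℕ → StrongDual ℝ E, (∀ n, f n ∈ polarCone C) ∧
      ∀ y ∈ closure C \ {0}, ∃ n, f n y < 0 := by
  obtain ⟨f, c, hfc⟩ :=
    RCLike.iInter_countable_halfSpaces_eq (𝕜 := ℝ) hconv.closure isClosed_closure
  have mem_closure_iff_forall_le (y : E) : y ∈ closure C ↔ ∀ n, f n y ≤ c n := by simp [← hfc]
  have hf (n : ℕ) : f n ∈ polarCone C := mem_polarCone_of_forall_le hcone fun y hy ↦
    (mem_closure_iff_forall_le y).1 (subset_closure hy) n
  refine ⟨f, hf, fun y ⟨hy, hy0⟩ ↦ ?_⟩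
  by_contra! hnonneg
  have hzero (n : ℕ) : f n y = 0 :=
    le_antisymm ((polarCone_closure.ge (hf n)) y hy) (hnonneg n)
  refine hsharp ⟨y, y, hy0, fun t ↦ (mem_closure_iff_forall_le _).2 fun n ↦ ?_⟩
  simpa [hzero n] using (mem_closure_iff_forall_le y).1 hy n

end Cone

theorem exists_pos_summable_smul {F : Type*} [NormedAddCommGroup F] [NormedSpace ℝ F]
    [CompleteSpace F] {ι : Type*} [Countable ι] (f : ι → F) :
    ∃ w : ι → ℝ, (∀ i, 0 < w i) ∧ Summable fun i ↦ w i • f i := by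
  obtain ⟨δ, hδ, _, hδsum, -⟩ := NNReal.exists_pos_sum_of_countable one_ne_zero ι
  have hw (i : ι) : (0 : ℝ) < δ i / (1 + ‖f i‖) := div_pos (hδ i) (by positivity)
  refine ⟨_, hw, .of_norm_bounded (NNReal.summable_coe.2 hδsum.summable) fun i ↦ ?_⟩
  calc ‖((δ i : ℝ) / (1 + ‖f i‖)) • f i‖ = δ i * (‖f i‖ / (1 + ‖f i‖)) := by
        rw [norm_smul, Real.norm_of_nonneg (hw i).le, div_mul_eq_mul_div, mul_div_assoc]
    _ ≤ δ i := mul_le_of_le_one_right (δ i).2 (div_le_one_of_le₀ (by linarith) (by positivity))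

section Normed

variable {E : Type*} [NormedAddCommGroup E] [NormedSpace ℝ E] {C : Set E}

theorem strictPolarCone_nonempty_of_seq {f : ℕ → StrongDual ℝ E} (hf : ∀ n, f n ∈ polarCone C)
    (hneg : ∀ y ∈ closure C \ {0}, ∃ n, f n y < 0) : (strictPolarCone C).Nonempty := by
  obtain ⟨w, hw, hsum⟩ := exists_pos_summable_smul f
  obtain ⟨β, hβ⟩ := hsum
  refine ⟨β, fun y hy ↦ ?_⟩
  have hβy : HasSum (fun n ↦ w n * f n y) (β y) :=
    hβ.mapL (ContinuousLinearMap.apply ℝ ℝ y)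
  have hle (n : ℕ) : w n * f n y ≤ 0 :=
    mul_nonpos_of_nonneg_of_nonpos (hw n).le (polarCone_closure.ge (hf n) y hy.1)
  obtain ⟨n, hn⟩ := hneg y hy
  exact hasSum_lt hle (mul_neg_of_pos_of_neg (hw n) hn) hβy hasSum_zero

theorem strictPolarCone_nonempty [SeparableSpace E] (hconv : Convex ℝ C)
    (hcone : ∀ t : ℝ, 0 < t → ∀ x ∈ C, t • x ∈ C)
    (hsharp : ¬ ∃ x v : E, v ≠ 0 ∧ ∀ t : ℝ, x + t • v ∈ closure C) :
    (strictPolarCone C).Nonempty := by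
  have : SecondCountableTopology E := UniformSpace.secondCountable_of_separable E
  obtain ⟨f, hf, hneg⟩ := exists_seq_polarCone_neg hconv hcone hsharp
  exact strictPolarCone_nonempty_of_seq hf hneg

theorem stmt_8_general [SeparableSpace E] (hne : C.Nonempty) (hopen : IsOpen C)
    (hconv : Convex ℝ C) (hcone : ∀ t : ℝ, 0 < t → ∀ x ∈ C, t • x ∈ C)
    (hsharp : ¬ ∃ x v : E, v ≠ 0 ∧ ∀ t : ℝ, x + t • v ∈ closure C) :
    {x | ∀ α ∈ closure (strictPolarCone C) \ {0}, α x < 0} = C := by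
  rw [closure_strictPolarCone (strictPolarCone_nonempty hconv hcone hsharp)]
  exact setOf_forall_polarCone_neg_eq hne hopen hconv hcone

end Normed

/-- for a sharp open convex cone `C ⊆ ℝⁿ`, the bidual
`{x | α x < 0 for all α ∈ closure(C*) \ {0}}` equals `C`, where
`C* = {α | α y < 0 for all y ∈ closure C \ {0}}` lies in the dual space. -/
theorem stmt_8 (n : ℕ) (C : Set (Fin n → ℝ))
    (hCne : C.Nonempty) (hCopen : IsOpen C) (hCconv : Convex ℝ C)
    (hCcone : ∀ t : ℝ, 0 < t → ∀ x ∈ C, t • x ∈ C)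
    (hCsharp : ¬ ∃ x v : Fin n → ℝ, v ≠ 0 ∧ ∀ t : ℝ, x + t • v ∈ closure C) :
    {x : Fin n → ℝ |
      ∀ α ∈ closure {α : (Fin n → ℝ) →L[ℝ] ℝ | ∀ y ∈ closure C \ {0}, α y < 0} \
        {(0 : (Fin n → ℝ) →L[ℝ] ℝ)}, α x < 0} = C :=
  stmt_8_general hCne hCopen hCconv hCcone hCsharp
end

section
/- Let C ⊆ ℝ^n be a sharp open convex cone with dual C* = {α ∈ (ℝ^n)* | α(x) < 0 for all x ∈ closure(C) \ {0}}. Then the following are equivalent: (i) for every x ∈ frontier(C) \ {0} and all nonzero α, β ∈ (ℝ^n)* satisfying α(y) ≤ 0 and β(y) ≤ 0 for all y ∈ closure(C) and α(x) = β(x) = 0, there exists c > 0 with β = c • α (uniqueness, up to positive scalar, of supporting hyperplanes: C is C¹); (ii) for all linearly independent α, β ∈ frontier(C*) \ {0} and every t ∈ (0,1), t • α + (1−t) • β ∈ C* (strict convexity of the dual cone C*). -/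
/-!
A functional `α` that is nonpositive on `closure C` is a limit of elements of `C*` as soon as `C*`
contains one element `γ`: consider `α + ε • γ`. Hence every functional supporting `C` at a nonzero
point lies on the frontier of `C*`. Conversely, if a proper convex combination of two elements of
`closure C*` is not in `C*`, then both of them vanish at a common nonzero point of `closure C`.
So two functionals in the frontier of `C*` support `C` at a common nonzero point exactly when the
open segment between them leaves `C*`.

That `C*` is nonempty is where sharpness enters. By Hahn–Banach every nonzero `x ∈ closure C` has a
functional that is nonpositive on `C` and negative at `x`. By the Lindelöf property countably many
of them suffice for all `x`, and a convergent positive combination of these is in `C*`.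
-/

open Set

section StrictDual

variable {E : Type*} [AddCommGroup E] [Module ℝ E] [TopologicalSpace E]

/-- The functionals negative on `K \ {0}`. The dual `C*` of a cone `C` is
`strictDual (closure C)`. -/
def strictDual (K : Set E) : Set (E →L[ℝ] ℝ) :=
  {α | ∀ y ∈ K \ {0}, α y < 0}

/-- The `C¹` property of a cone: at each nonzero frontier point, the supporting functional is unique
up to a positive scalar. -/
def HasUniqueSupport (C : Set E) : Prop :=
  ∀ x ∈ frontier C \ {0}, ∀ α β : E →L[ℝ] ℝ, α ≠ 0 → β ≠ 0 →
    (∀ y ∈ closure C, α y ≤ 0) → (∀ y ∈ closure C, β y ≤ 0) →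
    α x = 0 → β x = 0 → ∃ c : ℝ, 0 < c ∧ β = c • α

/-- Strict convexity of a cone: open segments between frontier points on distinct lines through the
origin stay inside the cone. -/
def IsStrictlyConvexCone (D : Set E) : Prop :=
  ∀ α ∈ frontier D \ {0}, ∀ β ∈ frontier D \ {0}, LinearIndependent ℝ ![α, β] →
    ∀ t ∈ Ioo (0 : ℝ) 1, t • α + (1 - t) • β ∈ D

variable {C K : Set E} {α β : E →L[ℝ] ℝ} {x : E}

theorem exists_pos_smul_eq_of_not_linearIndependent (hα : α x < 0) (hβ : β x < 0)
    (hdep : ¬ LinearIndependent ℝ ![α, β]) : ∃ c : ℝ, 0 < c ∧ β = c • α := by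
  have hα0 : α ≠ 0 := by
    rintro rfl
    exact lt_irrefl _ hα
  rw [LinearIndependent.pair_iff' hα0] at hdep
  push Not at hdep
  obtain ⟨c, rfl⟩ := hdep
  exact ⟨c, pos_of_mul_neg_left hβ hα.le, rfl⟩

theorem smul_add_smul_mem_strictDual (hα : ∀ y ∈ K, α y ≤ 0) (hβ : ∀ y ∈ K, β y ≤ 0)
    (hαβ : ∀ y ∈ K \ {0}, α y = 0 → β y ≠ 0) {a b : ℝ} (ha : 0 < a) (hb : 0 < b) :
    a • α + b • β ∈ strictDual K := by
  intro y hy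
  change a * α y + b * β y < 0
  rcases (hα y hy.1).lt_or_eq with hneg | hzero
  · exact add_neg_of_neg_of_nonpos (mul_neg_of_pos_of_neg ha hneg)
      (mul_nonpos_of_nonneg_of_nonpos hb.le (hβ y hy.1))
  · rw [hzero, mul_zero, zero_add]
    exact mul_neg_of_pos_of_neg hb ((hβ y hy.1).lt_of_ne (hαβ y hy hzero))

variable [ContinuousSMul ℝ E]

theorem apply_neg_of_isOpen_of_nonpos [ContinuousAdd E] (hC : IsOpen C) (hα : α ≠ 0)
    (hle : ∀ y ∈ C, α y ≤ 0) (hx : x ∈ C) : α x < 0 := by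
  have himage : α '' C ⊆ interior (Iic 0) :=
    interior_maximal (image_subset_iff.2 hle) (α.isOpenMap_of_ne_zero hα C hC)
  rw [interior_Iic] at himage
  exact himage (mem_image_of_mem α hx)

theorem apply_nonpos_of_mem_closure_strictDual (hα : α ∈ closure (strictDual K)) (hx : x ∈ K) :
    α x ≤ 0 := by
  have hclosed : IsClosed {δ : E →L[ℝ] ℝ | δ x ≤ 0} :=
    isClosed_le (continuous_eval_const x) continuous_const
  refine closure_minimal (fun δ hδ => ?_) hclosed hα
  rcases eq_or_ne x 0 with rfl | hx0
  · exact (map_zero δ).le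
  · exact (hδ x ⟨hx, hx0⟩).le

theorem mem_closure_strictDual_iff (hne : (strictDual K).Nonempty) :
    α ∈ closure (strictDual K) ↔ ∀ y ∈ K, α y ≤ 0 := by
  refine ⟨fun hα y hy => apply_nonpos_of_mem_closure_strictDual hα hy, fun hα => ?_⟩
  obtain ⟨γ, hγ⟩ := hne
  have hmem : ∀ ε ∈ Ioi (0 : ℝ), α + ε • γ ∈ strictDual K := fun ε hε y hy =>
    add_neg_of_nonpos_of_neg (hα y hy.1) (mul_neg_of_pos_of_neg hε (hγ y hy))
  have hcont : ContinuousWithinAt (fun ε : ℝ => α + ε • γ) (Ioi 0) 0 := by fun_prop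
  have hzero : (0 : ℝ) ∈ closure (Ioi 0) := by simp
  simpa using hcont.mem_closure hzero hmem

theorem mem_frontier_strictDual (hne : (strictDual K).Nonempty) (hα : ∀ y ∈ K, α y ≤ 0)
    (hx : x ∈ K \ {0}) (hαx : α x = 0) : α ∈ frontier (strictDual K) :=
  ⟨(mem_closure_strictDual_iff hne).2 hα, fun hint => (interior_subset hint x hx).ne hαx⟩

theorem HasUniqueSupport.isStrictlyConvexCone_strictDual [ContinuousAdd E] (hC : IsOpen C)
    (h : HasUniqueSupport C) : IsStrictlyConvexCone (strictDual (closure C)) := by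
  rintro α ⟨hα, hα0⟩ β ⟨hβ, hβ0⟩ hind t ⟨ht0, ht1⟩
  have hα_le : ∀ y ∈ closure C, α y ≤ 0 := fun y =>
    apply_nonpos_of_mem_closure_strictDual hα.1
  have hβ_le : ∀ y ∈ closure C, β y ≤ 0 := fun y =>
    apply_nonpos_of_mem_closure_strictDual hβ.1
  refine smul_add_smul_mem_strictDual hα_le hβ_le ?_ ht0 (sub_pos.2 ht1)
  rintro y ⟨hy, hy0⟩ hαy hβy
  have hyC : y ∉ C := fun hyC => (apply_neg_of_isOpen_of_nonpos hC hα0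
    (fun z hz => hα_le z (subset_closure hz)) hyC).ne hαy
  have hy_frontier : y ∈ frontier C := ⟨hy, by rwa [hC.interior_eq]⟩
  obtain ⟨c, -, hβc⟩ := h y ⟨hy_frontier, hy0⟩ α β hα0 hβ0 hα_le hβ_le hαy hβy
  exact (LinearIndependent.pair_iff' hα0).1 hind c hβc.symm

theorem IsStrictlyConvexCone.hasUniqueSupport [ContinuousAdd E] (hC : IsOpen C)
    (hne : (strictDual (closure C)).Nonempty)
    (h : IsStrictlyConvexCone (strictDual (closure C))) : HasUniqueSupport C := by
  rintro x ⟨hx, hx0⟩ α β hα0 hβ0 hα hβ hαx hβx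
  have hdep : ¬ LinearIndependent ℝ ![α, β] := by
    intro hind
    have hmid := h α ⟨mem_frontier_strictDual hne hα ⟨hx.1, hx0⟩ hαx, hα0⟩
      β ⟨mem_frontier_strictDual hne hβ ⟨hx.1, hx0⟩ hβx, hβ0⟩ hind (1 / 2) (by norm_num)
      x ⟨hx.1, hx0⟩
    simp [hαx, hβx] at hmid
  obtain ⟨z, hz⟩ : C.Nonempty := closure_nonempty_iff.1 ⟨x, hx.1⟩
  exact exists_pos_smul_eq_of_not_linearIndependent
    (apply_neg_of_isOpen_of_nonpos hC hα0 (fun y hy => hα y (subset_closure hy)) hz)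
    (apply_neg_of_isOpen_of_nonpos hC hβ0 (fun y hy => hβ y (subset_closure hy)) hz) hdep

theorem hasUniqueSupport_iff_isStrictlyConvexCone_strictDual [ContinuousAdd E] (hC : IsOpen C)
    (hne : (strictDual (closure C)).Nonempty) :
    HasUniqueSupport C ↔ IsStrictlyConvexCone (strictDual (closure C)) :=
  ⟨HasUniqueSupport.isStrictlyConvexCone_strictDual hC,
    IsStrictlyConvexCone.hasUniqueSupport hC hne⟩

end StrictDual

section Cone

theorem coe_hull_eq_self {E : Type*} [AddCommGroup E] [Module ℝ E] {C : Set E}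
    (hconv : Convex ℝ C) (hcone : ∀ t : ℝ, 0 < t → ∀ x ∈ C, t • x ∈ C) :
    (ConvexCone.hull ℝ C : Set E) = C := by
  refine Subset.antisymm (fun x hx => ?_) ConvexCone.subset_hull
  obtain ⟨r, hr, y, hy, rfl⟩ := (ConvexCone.mem_hull_of_convex hconv).1 hx
  exact hcone r hr y hy

theorem salient_of_not_exists_line {E : Type*} [AddCommGroup E] [Module ℝ E] {K : ConvexCone ℝ E}
    (hline : ¬ ∃ x v : E, v ≠ 0 ∧ ∀ t : ℝ, x + t • v ∈ K) : K.Salient := by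
  intro v hv hv0 hneg
  refine hline ⟨0, v, hv0, fun t => ?_⟩
  rw [zero_add]
  rcases lt_trichotomy t 0 with ht | rfl | ht
  · simpa using K.smul_mem (neg_pos.2 ht) hneg
  · simpa using K.add_mem hv hneg
  · exact K.smul_mem ht hv

theorem exists_nonpos_apply_neg_of_neg_notMem {E : Type*} [AddCommGroup E] [Module ℝ E]
    [TopologicalSpace E] [IsTopologicalAddGroup E] [ContinuousSMul ℝ E] [LocallyConvexSpace ℝ E]
    {K : ConvexCone ℝ E} (hK : IsClosed (K : Set E)) {x : E} (hx : x ∈ K) (hneg : -x ∉ K) :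
    ∃ f : E →L[ℝ] ℝ, (∀ y ∈ K, f y ≤ 0) ∧ f x < 0 := by
  lift K to ProperCone ℝ E using ⟨⟨x, hx⟩, hK⟩
  obtain ⟨f, hf_nonneg, hf_neg⟩ := K.hyperplane_separation_point hneg
  refine ⟨-f, fun y hy => neg_nonpos.2 (hf_nonneg y hy), ?_⟩
  rwa [map_neg] at hf_neg

variable {E : Type*} [NormedAddCommGroup E] [NormedSpace ℝ E]

theorem strictDual_nonempty_of_countable {ι : Type*} [Countable ι] {K : Set E}
    {f : ι → E →L[ℝ] ℝ} (hle : ∀ i, ∀ y ∈ K, f i y ≤ 0)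
    (hneg : ∀ y ∈ K \ {0}, ∃ i, f i y < 0) : (strictDual K).Nonempty := by
  obtain ⟨ε, hε, _, hε_sum, -⟩ := NNReal.exists_pos_sum_of_countable one_ne_zero ι
  let w : ι → ℝ := fun i => ε i / (1 + ‖f i‖)
  have hw : ∀ i, 0 < w i := fun i => div_pos (hε i) (by positivity)
  have hnorm : ∀ i, ‖w i • f i‖ ≤ ε i := by
    intro i
    rw [norm_smul, Real.norm_of_nonneg (hw i).le, div_mul_eq_mul_div]
    exact div_le_of_le_mul₀ (by positivity) (by positivity) (by gcongr; linarith)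
  have hsum : Summable fun i => w i • f i :=
    .of_norm_bounded (NNReal.summable_coe.2 hε_sum.summable) hnorm
  refine ⟨∑' i, w i • f i, fun y hy => ?_⟩
  obtain ⟨i, hi⟩ := hneg y hy
  have hsum_apply : HasSum (fun i => w i * f i y) ((∑' i, w i • f i) y) :=
    hsum.hasSum.mapL (ContinuousLinearMap.apply ℝ ℝ y)
  exact hasSum_lt (fun j => mul_nonpos_of_nonneg_of_nonpos (hw j).le (hle j y hy.1))
    (mul_neg_of_pos_of_neg (hw i) hi) hsum_apply hasSum_zero

theorem strictDual_nonempty_of_salient [TopologicalSpace.SeparableSpace E] {K : ConvexCone ℝ E}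
    (hK : IsClosed (K : Set E)) (hsal : K.Salient) : (strictDual (K : Set E)).Nonempty := by
  have : SecondCountableTopology E := UniformSpace.secondCountable_of_separable E
  let F : Set (E →L[ℝ] ℝ) := {f | ∀ y ∈ K, f y ≤ 0}
  obtain ⟨t, ht, hcover⟩ := eq_open_union_countable (fun f : F => {y | f.1 y < 0})
    fun f => isOpen_lt f.1.continuous continuous_const
  have : Countable t := ht
  refine strictDual_nonempty_of_countable (f := fun f : t => f.1.1) (fun f => f.1.2) ?_
  rintro y ⟨hy, hy0⟩
  obtain ⟨f, hf, hfy⟩ := exists_nonpos_apply_neg_of_neg_notMem hK hy (hsal y hy hy0)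
  have hy_mem : y ∈ ⋃ f ∈ t, {y | f.1 y < 0} := by
    rw [hcover]
    exact mem_iUnion.2 ⟨⟨f, hf⟩, hfy⟩
  obtain ⟨g, hg, hgy⟩ := mem_iUnion₂.1 hy_mem
  exact ⟨⟨g, hg⟩, hgy⟩

theorem strictDual_closure_nonempty [TopologicalSpace.SeparableSpace E] {C : Set E}
    (hconv : Convex ℝ C) (hcone : ∀ t : ℝ, 0 < t → ∀ x ∈ C, t • x ∈ C)
    (hsharp : ¬ ∃ x v : E, v ≠ 0 ∧ ∀ t : ℝ, x + t • v ∈ closure C) :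
    (strictDual (closure C)).Nonempty := by
  rw [← coe_hull_eq_self hconv hcone, ← ConvexCone.coe_closure] at hsharp ⊢
  exact strictDual_nonempty_of_salient isClosed_closure (salient_of_not_exists_line hsharp)

theorem stmt_9_general [TopologicalSpace.SeparableSpace E] {C : Set E} (hopen : IsOpen C)
    (hconv : Convex ℝ C) (hcone : ∀ t : ℝ, 0 < t → ∀ x ∈ C, t • x ∈ C)
    (hsharp : ¬ ∃ x v : E, v ≠ 0 ∧ ∀ t : ℝ, x + t • v ∈ closure C) :
    HasUniqueSupport C ↔ IsStrictlyConvexCone (strictDual (closure C)) :=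
  hasUniqueSupport_iff_isStrictlyConvexCone_strictDual hopen
    (strictDual_closure_nonempty hconv hcone hsharp)

end Cone

/-- for a sharp open convex cone `C ⊆ ℝⁿ` with dual `C*`, the cone
`C` is `C¹` (supporting functionals at boundary points are unique up to positive
scalar) iff the dual cone `C*` is strictly convex. -/
theorem stmt_9 (n : ℕ) (C : Set (Fin n → ℝ))
    (hCne : C.Nonempty) (hCopen : IsOpen C) (hCconv : Convex ℝ C)
    (hCcone : ∀ t : ℝ, 0 < t → ∀ x ∈ C, t • x ∈ C)
    (hCsharp : ¬ ∃ x v : Fin n → ℝ, v ≠ 0 ∧ ∀ t : ℝ, x + t • v ∈ closure C) :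
    (∀ x ∈ frontier C \ {0}, ∀ α β : (Fin n → ℝ) →L[ℝ] ℝ, α ≠ 0 → β ≠ 0 →
        (∀ y ∈ closure C, α y ≤ 0) → (∀ y ∈ closure C, β y ≤ 0) →
        α x = 0 → β x = 0 → ∃ c : ℝ, 0 < c ∧ β = c • α) ↔
      (∀ α ∈ frontier {α : (Fin n → ℝ) →L[ℝ] ℝ | ∀ y ∈ closure C \ {0}, α y < 0} \ {0},
        ∀ β ∈ frontier {α : (Fin n → ℝ) →L[ℝ] ℝ | ∀ y ∈ closure C \ {0}, α y < 0} \ {0},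
        LinearIndependent ℝ ![α, β] → ∀ t ∈ Set.Ioo (0 : ℝ) 1,
          t • α + (1 - t) • β ∈
            {α : (Fin n → ℝ) →L[ℝ] ℝ | ∀ y ∈ closure C \ {0}, α y < 0}) :=
  stmt_9_general hCopen hCconv hCcone hCsharp
end

section
/- Let k ≥ 2 and let f : ℝ^k → ℝ be continuous. Then f is proper (the preimage of every compact set is compact; equivalently, |f| tends to +∞ along the cocompact filter of ℝ^k) if and only if f tends to +∞ along the cocompact filter of ℝ^k or f tends to −∞ along the cocompact filter of ℝ^k. -/
open Filter

/-!
In dimension at least two, the exterior of a ball is connected. Far out, a proper function omits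
any prescribed value `c`, so by the intermediate value theorem it stays on one side of `c` there,
and of the two ends of the line only one can then be approached.
-/

open Metric Set

section OrderTarget

variable {X α : Type*} [TopologicalSpace X] [LinearOrder α] [TopologicalSpace α]
  [OrderClosedTopology α]

theorem mapsTo_Iio_or_mapsTo_Ioi_of_isPreconnected {s : Set X} {f : X → α} {c : α}
    (hs : IsPreconnected s) (hf : ContinuousOn f s) (hc : ∀ x ∈ s, f x ≠ c) :
    MapsTo f s (Iio c) ∨ MapsTo f s (Ioi c) := by
  by_contra! h
  simp only [MapsTo, mem_Iio, mem_Ioi, not_forall, not_lt] at h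
  obtain ⟨⟨b, hb, hcb⟩, a, ha, hac⟩ := h
  obtain ⟨x, hx, hxc⟩ := hs.intermediate_value ha hb hf ⟨hac, hcb⟩
  exact hc x hx hxc

theorem tendsto_atBot_sup_atTop_iff_of_hasBasis_isPreconnected [NoMinOrder α] [NoMaxOrder α]
    {ι : Sort*} {l : Filter X} {p : ι → Prop} {s : ι → Set X} {f : X → α} (hl : l.HasBasis p s)
    (hs : ∀ i, p i → IsPreconnected (s i)) (hf : ∀ i, p i → ContinuousOn f (s i)) :
    Tendsto f l (atBot ⊔ atTop) ↔ Tendsto f l atTop ∨ Tendsto f l atBot := by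
  refine ⟨fun h ↦ ?_, Or.rec (·.mono_right le_sup_right) (·.mono_right le_sup_left)⟩
  rcases isEmpty_or_nonempty X with _ | ⟨⟨x₀⟩⟩
  · exact .inl (by simp only [filter_eq_bot_of_isEmpty l, tendsto_bot])
  set c := f x₀
  have eventually_ne : ∀ᶠ x in l, f x ≠ c :=
    h.eventually (eventually_sup.2 ⟨eventually_ne_atBot c, eventually_ne_atTop c⟩)
  obtain ⟨i, hi, hne⟩ := hl.eventually_iff.1 eventually_ne
  have mem_l : s i ∈ l := hl.mem_of_mem hi
  rcases mapsTo_Iio_or_mapsTo_Ioi_of_isPreconnected (hs i hi) (hf i hi) @hne with hlt | hgt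
  · have below : Tendsto f l ((atBot ⊔ atTop) ⊓ 𝓟 (Iio c)) :=
      tendsto_inf.2 ⟨h, tendsto_principal.2 (mem_of_superset mem_l hlt)⟩
    rw [inf_sup_right, (disjoint_atTop_principal_Iio c).eq_bot, sup_bot_eq] at below
    exact .inr (below.mono_right inf_le_left)
  · have above : Tendsto f l ((atBot ⊔ atTop) ⊓ 𝓟 (Ioi c)) :=
      tendsto_inf.2 ⟨h, tendsto_principal.2 (mem_of_superset mem_l hgt)⟩
    rw [inf_sup_right, (disjoint_atBot_principal_Ioi c).eq_bot, bot_sup_eq] at above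
    exact .inl (above.mono_right inf_le_left)

end OrderTarget

section NormedSpace

variable {E : Type*} [NormedAddCommGroup E] [NormedSpace ℝ E]

theorem image_add_smul_Ioi_prod_sphere (x : E) {r : ℝ} (hr : 0 ≤ r) :
    (fun p : ℝ × E ↦ x + p.1 • p.2) '' (Ioi r ×ˢ sphere 0 1) = (closedBall x r)ᶜ := by
  ext y
  simp only [mem_image, mem_prod, mem_Ioi, mem_sphere_zero_iff_norm, mem_compl_iff,
    mem_closedBall_iff_norm, not_le, Prod.exists]
  constructor
  · rintro ⟨t, u, ⟨ht, hu⟩, rfl⟩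
    rwa [add_sub_cancel_left, norm_smul, hu, mul_one, Real.norm_of_nonneg (hr.trans ht.le)]
  · intro hy
    have norm_ne_zero : ‖y - x‖ ≠ 0 := (hr.trans_lt hy).ne'
    refine ⟨‖y - x‖, ‖y - x‖⁻¹ • (y - x), ⟨hy, ?_⟩, ?_⟩
    · rw [norm_smul, norm_inv, norm_norm, inv_mul_cancel₀ norm_ne_zero]
    · rw [smul_inv_smul₀ norm_ne_zero, add_sub_cancel]

theorem isPreconnected_compl_closedBall (h : 1 < Module.rank ℝ E) (x : E) (r : ℝ) :
    IsPreconnected (closedBall x r)ᶜ := by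
  rcases lt_or_ge r 0 with hr | hr
  · simpa only [closedBall_eq_empty.2 hr, compl_empty] using
      (isPreconnected_univ : IsPreconnected (univ : Set E))
  · rw [← image_add_smul_Ioi_prod_sphere x hr]
    exact (isPreconnected_Ioi.prod (isPreconnected_sphere h 0 1)).image _ (by fun_prop)

theorem stmt_10_general [ProperSpace E] (hE : 1 < Module.rank ℝ E) {α : Type*} [LinearOrder α]
    [TopologicalSpace α] [OrderClosedTopology α] [CompactIccSpace α] [NoMinOrder α] [NoMaxOrder α]
    {f : E → α} (hf : Continuous f) :
    Tendsto f (cocompact E) (cocompact α) ↔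
      Tendsto f (cocompact E) atTop ∨ Tendsto f (cocompact E) atBot := by
  rw [cocompact_eq_atBot_atTop (α := α), ← cobounded_eq_cocompact]
  exact tendsto_atBot_sup_atTop_iff_of_hasBasis_isPreconnected
    (hasBasis_cobounded_compl_closedBall 0) (fun r _ ↦ isPreconnected_compl_closedBall hE 0 r)
    fun _ _ ↦ hf.continuousOn

end NormedSpace

/-- a continuous function `f : ℝᵏ → ℝ` (`k ≥ 2`) is proper iff it
tends to `+∞` or to `-∞` along the cocompact filter of `ℝᵏ`. -/
theorem stmt_10 (k : ℕ) (hk : 2 ≤ k) (f : (Fin k → ℝ) → ℝ) (hf : Continuous f) :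
    Tendsto f (cocompact (Fin k → ℝ)) (cocompact ℝ) ↔
      Tendsto f (cocompact (Fin k → ℝ)) atTop ∨
      Tendsto f (cocompact (Fin k → ℝ)) atBot :=
  stmt_10_general (by rw [rank_fin_fun]; exact_mod_cast hk) hf
end

section
/- Let C ⊆ ℝ^n be a sharp open convex cone that is strictly convex, meaning that for all linearly independent a, b ∈ frontier(C) \ {0} and all t ∈ (0,1) one has t • a + (1−t) • b ∈ C. Let g ∈ GL(n,ℝ) satisfy g · C = C, and let x, y, z ∈ frontier(C) \ {0} be pairwise linearly independent vectors that are eigenvectors of g: g x = λ₁ • x, g y = λ₂ • y, g z = λ₃ • z for real numbers λ₁, λ₂, λ₃. Then λ₁ = λ₂ = λ₃. -/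
/-!
Let `f` map the open convex cone `C` into itself, and let `x`, `y`, `z` be eigenvectors outside `C`
whose pairwise sums lie in `C`. Then the eigenvalues are positive. Suppose the eigenvalue `l₃` of
`z` is smaller than the eigenvalue `l₁` of `x`, and pick `e > 0` with `y + z - e • x ∈ C`. Applying
`f ^ k` gives `l₂ ^ k • y + l₃ ^ k • z - (e * l₁ ^ k) • x ∈ C`, in which the `z`-term is negligible
compared to the `x`-term. Adding `(e * l₁ ^ k) • (x + y)`, slightly perturbed along `z`, cancels
both terms and leaves a positive multiple of `y` in `C`, a contradiction.
-/

open Filter Set Topology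

theorem pow_apply_eq_pow_smul {R M : Type*} [CommSemiring R] [AddCommMonoid M] [Module R M]
    {f : Module.End R M} {l : R} {x : M} (hx : f x = l • x) (k : ℕ) : (f ^ k) x = l ^ k • x := by
  induction k with
  | zero => simp
  | succ k ih => rw [pow_succ', Module.End.mul_apply, ih, map_smul, hx, smul_smul, pow_succ]

section Cone

variable {𝕜 E : Type*} [Field 𝕜] [LinearOrder 𝕜] [IsStrictOrderedRing 𝕜] [AddCommGroup E]
  [Module 𝕜 E]

theorem exists_convexCone_coe_eq {C : Set E} (hconv : Convex 𝕜 C)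
    (hcone : ∀ t : 𝕜, 0 < t → ∀ x ∈ C, t • x ∈ C) : ∃ K : ConvexCone 𝕜 E, (K : Set E) = C := by
  refine ⟨⟨C, fun t ht x hx ↦ hcone t ht x hx, fun x hx y hy ↦ ?_⟩, rfl⟩
  simpa [midpoint_eq_smul_add, smul_smul] using hcone 2 two_pos _ (hconv.midpoint_mem hx hy)

-- Adding a suitable multiple of `x + y` to `a • x + b • y` eliminates `x` or `y`.
theorem pos_of_smul_add_smul_mem {C : ConvexCone 𝕜 E} {x y : E} {a b : 𝕜} (hC : C.Blunt)
    (hx : x ∉ C) (hy : y ∉ C) (hxy : x + y ∈ C) (hab : a • x + b • y ∈ C) : 0 < a := by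
  by_contra! ha
  have add_multiple {t : 𝕜} (ht : 0 ≤ t) : a • x + b • y + t • (x + y) ∈ C := by
    rcases ht.eq_or_lt with rfl | ht
    · simpa using hab
    · exact C.add_mem hab (C.smul_mem ht hxy)
  have hy_mul : (b - a) • y ∈ C := by
    convert add_multiple (neg_nonneg.2 ha) using 1
    module
  have hba : b ≤ a := by
    by_contra! hlt
    exact hy ((C.smul_mem_iff (sub_pos.2 hlt)).1 hy_mul)
  have hx_mul : (a - b) • x ∈ C := by
    convert add_multiple (neg_nonneg.2 (hba.trans ha)) using 1
    module
  rcases hba.eq_or_lt with rfl | hlt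
  · exact hC (by simpa using hx_mul)
  · exact hx ((C.smul_mem_iff (sub_pos.2 hlt)).1 hx_mul)

end Cone

section OpenCone

variable {E : Type*} [AddCommGroup E] [Module ℝ E] [TopologicalSpace E]
  [IsTopologicalAddGroup E] [ContinuousSMul ℝ E]

theorem eventually_sub_smul_mem {U : Set E} (hU : IsOpen U) {a : E} (ha : a ∈ U) (b : E) :
    ∀ᶠ t in 𝓝 (0 : ℝ), a - t • b ∈ U := by
  have hcont : Continuous fun t : ℝ ↦ a - t • b := by fun_prop
  exact hcont.continuousAt.eventually_mem (hU.mem_nhds (by simpa using ha))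

theorem exists_pos_sub_smul_mem {U : Set E} (hU : IsOpen U) {a : E} (ha : a ∈ U) (b : E) :
    ∃ t : ℝ, 0 < t ∧ a - t • b ∈ U := by
  have hright := (eventually_sub_smul_mem hU ha b).filter_mono (nhdsWithin_le_nhds (s := Ioi 0))
  exact ((eventually_mem_nhdsWithin (s := Ioi 0)).and hright).exists

variable {C : ConvexCone ℝ E} {f : Module.End ℝ E} {x y z : E} {l₁ l₂ l₃ : ℝ}

theorem blunt_of_isOpen_of_notMem (hC : IsOpen (C : Set E)) (hx : x ∉ C) : C.Blunt := by
  intro h0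
  obtain ⟨t, ht, ht_mem⟩ := exists_pos_sub_smul_mem hC h0 (-x)
  exact hx ((C.smul_mem_iff ht).1 (by simpa using ht_mem))

theorem eigenvalue_pos_of_add_mem (hC : IsOpen (C : Set E)) (hf : MapsTo f C C) (hx : x ∉ C)
    (hy : y ∉ C) (hxy : x + y ∈ C) (hfx : f x = l₁ • x) (hfy : f y = l₂ • y) : 0 < l₁ :=
  pos_of_smul_add_smul_mem (b := l₂) (blunt_of_isOpen_of_notMem hC hx) hx hy hxy <| by
    simpa [hfx, hfy] using hf hxy

theorem eigenvalue_le_of_add_mem (hC : IsOpen (C : Set E)) (hf : MapsTo f C C)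
    (hx : x ∉ C) (hy : y ∉ C) (hz : z ∉ C) (hxy : x + y ∈ C) (hyz : y + z ∈ C)
    (hfx : f x = l₁ • x) (hfy : f y = l₂ • y) (hfz : f z = l₃ • z) : l₁ ≤ l₃ := by
  have h₁ : 0 < l₁ := eigenvalue_pos_of_add_mem hC hf hx hy hxy hfx hfy
  have h₂ : 0 < l₂ := eigenvalue_pos_of_add_mem hC hf hy hz hyz hfy hfz
  have h₃ : 0 < l₃ := eigenvalue_pos_of_add_mem hC hf hz hy (add_comm y z ▸ hyz) hfz hfy
  by_contra! hlt
  obtain ⟨e, he, he_mem⟩ := exists_pos_sub_smul_mem hC hyz x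
  have iterate_mem (k : ℕ) : l₂ ^ k • y + l₃ ^ k • z - (e * l₁ ^ k) • x ∈ C := by
    have := hf.iterate k he_mem
    rwa [← Module.End.pow_apply, map_sub, map_add, map_smul, pow_apply_eq_pow_smul hfx,
      pow_apply_eq_pow_smul hfy, pow_apply_eq_pow_smul hfz, smul_smul] at this
  have ratio_tendsto : Tendsto (fun k : ℕ ↦ (l₃ / l₁) ^ k / e) atTop (𝓝 0) := by
    simpa using (tendsto_pow_atTop_nhds_zero_of_lt_one (by positivity)
      ((div_lt_one h₁).2 hlt)).div_const e
  obtain ⟨k, hk⟩ := (ratio_tendsto.eventually (eventually_sub_smul_mem hC hxy z)).exists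
  have sum_mem : (l₂ ^ k + e * l₁ ^ k) • y ∈ C := by
    convert C.add_mem (iterate_mem k) (C.smul_mem (by positivity : 0 < e * l₁ ^ k) hk) using 1
    have cancel : e * l₁ ^ k * ((l₃ / l₁) ^ k / e) = l₃ ^ k := by
      rw [div_pow]
      field_simp
    rw [smul_sub, smul_smul, cancel]
    module
  exact hy ((C.smul_mem_iff (by positivity)).1 sum_mem)

theorem eigenvalue_eq_of_add_mem (hC : IsOpen (C : Set E)) (hf : MapsTo f C C)
    (hx : x ∉ C) (hy : y ∉ C) (hz : z ∉ C) (hxy : x + y ∈ C) (hyz : y + z ∈ C)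
    (hfx : f x = l₁ • x) (hfy : f y = l₂ • y) (hfz : f z = l₃ • z) : l₁ = l₃ :=
  (eigenvalue_le_of_add_mem hC hf hx hy hz hxy hyz hfx hfy hfz).antisymm <|
    eigenvalue_le_of_add_mem hC hf hz hy hx (add_comm y z ▸ hyz) (add_comm x y ▸ hxy) hfz hfy hfx

theorem stmt_11_general {C : Set E} (hCopen : IsOpen C) (hCconv : Convex ℝ C)
    (hCcone : ∀ t : ℝ, 0 < t → ∀ x ∈ C, t • x ∈ C)
    (hCstrict : ∀ a ∈ frontier C \ {0}, ∀ b ∈ frontier C \ {0},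
      LinearIndependent ℝ ![a, b] → ∀ t ∈ Ioo (0 : ℝ) 1, t • a + (1 - t) • b ∈ C)
    (hf : MapsTo f C C)
    (hx : x ∈ frontier C \ {0}) (hy : y ∈ frontier C \ {0}) (hz : z ∈ frontier C \ {0})
    (hxy : LinearIndependent ℝ ![x, y]) (hxz : LinearIndependent ℝ ![x, z])
    (hyz : LinearIndependent ℝ ![y, z])
    (hfx : f x = l₁ • x) (hfy : f y = l₂ • y) (hfz : f z = l₃ • z) : l₁ = l₂ ∧ l₂ = l₃ := by
  obtain ⟨K, rfl⟩ := exists_convexCone_coe_eq hCconv hCcone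
  have notMem : ∀ a ∈ frontier (K : Set E) \ {0}, a ∉ K := fun a ha ↦
    disjoint_left.1 (disjoint_frontier_iff_isOpen.2 hCopen) ha.1
  have add_mem : ∀ a ∈ frontier (K : Set E) \ {0}, ∀ b ∈ frontier (K : Set E) \ {0},
      LinearIndependent ℝ ![a, b] → a + b ∈ K := fun a ha b hb hab ↦ by
    convert K.smul_mem two_pos (hCstrict a ha b hb hab (1 / 2) (by norm_num)) using 1
    module
  have hxy_mem := add_mem x hx y hy hxy
  have hxz_mem := add_mem x hx z hz hxz
  have hyz_mem := add_mem y hy z hz hyz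
  exact ⟨eigenvalue_eq_of_add_mem hCopen hf (notMem x hx) (notMem z hz) (notMem y hy) hxz_mem
      (add_comm y z ▸ hyz_mem) hfx hfz hfy,
    eigenvalue_eq_of_add_mem hCopen hf (notMem y hy) (notMem x hx) (notMem z hz)
      (add_comm x y ▸ hxy_mem) hxz_mem hfy hfx hfz⟩

end OpenCone

/-- if `C ⊆ ℝⁿ` is a strictly convex sharp open convex cone
preserved by `g ∈ GL(n,ℝ)`, and `x, y, z ∈ frontier C \ {0}` are pairwise
linearly independent eigenvectors of `g` with eigenvalues `λ₁, λ₂, λ₃`, then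
`λ₁ = λ₂ = λ₃`. -/
theorem stmt_11 (n : ℕ) (C : Set (Fin n → ℝ))
    (hCne : C.Nonempty) (hCopen : IsOpen C) (hCconv : Convex ℝ C)
    (hCcone : ∀ t : ℝ, 0 < t → ∀ x ∈ C, t • x ∈ C)
    (hCsharp : ¬ ∃ x v : Fin n → ℝ, v ≠ 0 ∧ ∀ t : ℝ, x + t • v ∈ closure C)
    (hCstrict : ∀ a ∈ frontier C \ {0}, ∀ b ∈ frontier C \ {0},
      LinearIndependent ℝ ![a, b] → ∀ t ∈ Set.Ioo (0 : ℝ) 1, t • a + (1 - t) • b ∈ C)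
    (g : Matrix.GeneralLinearGroup (Fin n) ℝ)
    (hg : (fun v => Matrix.mulVec (g : Matrix (Fin n) (Fin n) ℝ) v) '' C = C)
    (x y z : Fin n → ℝ)
    (hx : x ∈ frontier C \ {0}) (hy : y ∈ frontier C \ {0}) (hz : z ∈ frontier C \ {0})
    (hxy : LinearIndependent ℝ ![x, y]) (hxz : LinearIndependent ℝ ![x, z])
    (hyz : LinearIndependent ℝ ![y, z])
    (l₁ l₂ l₃ : ℝ)
    (hgx : Matrix.mulVec (g : Matrix (Fin n) (Fin n) ℝ) x = l₁ • x)
    (hgy : Matrix.mulVec (g : Matrix (Fin n) (Fin n) ℝ) y = l₂ • y)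
    (hgz : Matrix.mulVec (g : Matrix (Fin n) (Fin n) ℝ) z = l₃ • z) :
    l₁ = l₂ ∧ l₂ = l₃ := by
  have hgC : MapsTo (Matrix.mulVecLin (g : Matrix (Fin n) (Fin n) ℝ)) C C :=
    mapsTo_iff_image_subset.2 hg.subset
  exact stmt_11_general hCopen hCconv hCcone hCstrict hgC hx hy hz hxy hxz hyz hgx hgy hgz
end

section
/- Let B be a group and A a normal subgroup of B. If A is virtually solvable and the quotient group B/A is virtually solvable, then B is virtually solvable. -/
/-!
Let `f : G →* H` have virtually solvable kernel and target. The solvable radical `R` of `ker f` is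
solvable of finite index in `ker f`, and it is normal in `G` because it is characteristic in
`ker f`. Dividing out `R` makes the kernel finite. A finite normal subgroup is centralized by a
subgroup of finite index, so in that finite-index subgroup the kernel becomes abelian, and one only
has to pull back a solvable subgroup of finite index along a homomorphism with solvable kernel.
-/

section Solvable

variable {G H : Type*} [Group G] [Group H]

theorem isSolvable_map (f : G →* H) (K : Subgroup G) [Group.IsSolvable K] :
    Group.IsSolvable (K.map f) :=
  Group.isSolvable_of_surjective (f.subgroupMap_surjective K)

theorem isSolvable_comap (f : G →* H) [Group.IsSolvable f.ker] (K : Subgroup H)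
    [Group.IsSolvable K] : Group.IsSolvable (K.comap f) := by
  refine Group.isSolvable_of_ker_le_range (Subgroup.inclusion (f.ker_le_comap K))
    (f.subgroupComap K) fun x hx ↦ ?_
  exact ⟨⟨x, congrArg Subtype.val hx⟩, rfl⟩

theorem isSolvable_sup (M N : Subgroup G) [N.Normal] [Group.IsSolvable M] [Group.IsSolvable N] :
    Group.IsSolvable (M ⊔ N : Subgroup G) := by
  have hker : Group.IsSolvable (QuotientGroup.mk' N).ker := by rwa [QuotientGroup.ker_mk']
  have hmap := isSolvable_map (QuotientGroup.mk' N) M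
  have hcomap := isSolvable_comap (QuotientGroup.mk' N) (M.map (QuotientGroup.mk' N))
  rwa [Subgroup.comap_map_eq, QuotientGroup.ker_mk'] at hcomap

variable (G) in
/-- The solvable radical of a group: the subgroup generated by all solvable normal subgroups. It is
itself solvable when `G` is virtually solvable, but not in general. -/
def solvableRadical : Subgroup G :=
  sSup {N | N.Normal ∧ Group.IsSolvable N}

theorem le_solvableRadical (N : Subgroup G) [hN : N.Normal] [hs : Group.IsSolvable N] :
    N ≤ solvableRadical G :=
  le_sSup ⟨hN, hs⟩

theorem map_solvableRadical_le {f : G →* H} (hf : Function.Surjective f) :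
    (solvableRadical G).map f ≤ solvableRadical H := by
  rw [Subgroup.map_le_iff_le_comap]
  refine sSup_le fun N ⟨hN, _⟩ ↦ Subgroup.map_le_iff_le_comap.mp ?_
  have := hN.map f hf
  have := isSolvable_map f N
  exact le_solvableRadical (N.map f)

instance solvableRadical_characteristic : (solvableRadical G).Characteristic :=
  Subgroup.characteristic_iff_map_le.mpr fun φ ↦ map_solvableRadical_le φ.surjective

end Solvable

section Finite

variable {G H : Type*} [Group G] [Group H]

theorem ker_conjNormal (N : Subgroup G) [N.Normal] :
    (MulAut.conjNormal : G →* MulAut N).ker = Subgroup.centralizer N := by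
  ext g
  simp only [MonoidHom.mem_ker, MulEquiv.ext_iff, Subtype.ext_iff, Subtype.forall,
    MulAut.conjNormal_apply, MulAut.one_apply, mul_inv_eq_iff_eq_mul,
    Subgroup.mem_centralizer_iff, SetLike.mem_coe]
  exact forall₂_congr fun _ _ ↦ eq_comm

theorem finiteIndex_centralizer_of_finite (N : Subgroup G) [N.Normal] [Finite N] :
    (Subgroup.centralizer (N : Set G)).FiniteIndex := by
  have : Finite (MulAut N) := Finite.of_injective _ DFunLike.coe_injective
  rw [← ker_conjNormal]
  infer_instance

theorem finite_map_of_isFiniteRelIndex_ker (f : G →* H) (K : Subgroup G)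
    [f.ker.IsFiniteRelIndex K] : Finite (K.map f) :=
  Nat.finite_of_card_ne_zero <| Subgroup.relIndex_ker f (K := K) ▸ Subgroup.relIndex_ne_zero

end Finite

/-- A group is virtually solvable if it has a solvable subgroup of finite index. -/
def IsVirtuallySolvable (G : Type*) [Group G] : Prop :=
  ∃ H : Subgroup G, H.FiniteIndex ∧ Group.IsSolvable H

namespace IsVirtuallySolvable

variable {G H : Type*} [Group G] [Group H]

theorem of_finiteIndex {K : Subgroup G} [K.FiniteIndex] (hK : IsVirtuallySolvable K) :
    IsVirtuallySolvable G := by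
  obtain ⟨L, hL, hLs⟩ := hK
  refine ⟨L.map K.subtype, ⟨?_⟩, isSolvable_map K.subtype L⟩
  rw [Subgroup.index_map_subtype]
  exact mul_ne_zero hL.index_ne_zero Subgroup.FiniteIndex.index_ne_zero

theorem exists_normal_finiteIndex_isSolvable (hG : IsVirtuallySolvable G) :
    ∃ N : Subgroup G, N.Normal ∧ N.FiniteIndex ∧ Group.IsSolvable N := by
  obtain ⟨K, hK, hKs⟩ := hG
  exact ⟨K.normalCore, inferInstance, inferInstance,
    Group.isSolvable_of_isSolvable_injective (Subgroup.inclusion_injective K.normalCore_le)⟩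

theorem finiteIndex_solvableRadical (hG : IsVirtuallySolvable G) :
    (solvableRadical G).FiniteIndex := by
  obtain ⟨N, hN, hNf, hNs⟩ := hG.exists_normal_finiteIndex_isSolvable
  exact Subgroup.finiteIndex_of_le (le_solvableRadical N)

theorem isSolvable_solvableRadical (hG : IsVirtuallySolvable G) :
    Group.IsSolvable (solvableRadical G) := by
  -- A solvable normal subgroup `N` of minimal finite index absorbs every solvable normal
  -- subgroup `K`, since `K ⊔ N` is again solvable and normal.
  obtain ⟨N, ⟨hN, hNf, hNs⟩, hmin⟩ :=
    exists_minimalFor_of_wellFoundedLT _ Subgroup.index hG.exists_normal_finiteIndex_isSolvable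
  have absorbs (K : Subgroup G) (hK : K.Normal ∧ Group.IsSolvable K) : K ≤ N := by
    obtain ⟨hKn, hKs⟩ := hK
    have hsup : (K ⊔ N).Normal ∧ (K ⊔ N).FiniteIndex ∧ Group.IsSolvable (K ⊔ N : Subgroup G) :=
      ⟨inferInstance, Subgroup.finiteIndex_of_le le_sup_right, isSolvable_sup K N⟩
    have hindex : N.index ≤ (K ⊔ N).index := hmin hsup (Subgroup.index_antitone le_sup_right)
    by_contra hKN
    exact (Subgroup.index_strictAnti (right_lt_sup.mpr hKN)).not_ge hindex
  exact Group.isSolvable_of_isSolvable_injective (Subgroup.inclusion_injective (sSup_le absorbs))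

theorem of_isSolvable_ker (f : G →* H) [Group.IsSolvable f.ker] (hH : IsVirtuallySolvable H) :
    IsVirtuallySolvable G := by
  obtain ⟨K, hK, hKs⟩ := hH
  refine ⟨K.comap f, ⟨?_⟩, isSolvable_comap f K⟩
  rw [Subgroup.index_comap]
  exact (Subgroup.isFiniteRelIndex_of_finiteIndex (H := K) (K := f.range)).relIndex_ne_zero

theorem of_finite_ker (f : G →* H) [Finite f.ker] (hH : IsVirtuallySolvable H) :
    IsVirtuallySolvable G := by
  let C := Subgroup.centralizer (f.ker : Set G)
  have hC : C.FiniteIndex := finiteIndex_centralizer_of_finite f.ker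
  have hker : Group.IsSolvable (f.domRestrict C).ker :=
    Group.isSolvable_of_comm fun a b ↦
      Subtype.ext <| Subtype.ext <| Subgroup.mem_centralizer_iff.mp b.1.2 a a.2
  exact (of_isSolvable_ker (f.domRestrict C) hH).of_finiteIndex

theorem of_ker (f : G →* H) (hker : IsVirtuallySolvable f.ker) (hH : IsVirtuallySolvable H) :
    IsVirtuallySolvable G := by
  let R : Subgroup G := (solvableRadical f.ker).map f.ker.subtype
  let π : G →* G ⧸ R := QuotientGroup.mk' R
  have hπR : π.ker = R := QuotientGroup.ker_mk' R
  have hRf : R ≤ f.ker := Subgroup.map_subtype_le _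
  have hfinite : Finite (QuotientGroup.lift R f hRf).ker := by
    have : π.ker.IsFiniteRelIndex f.ker := by
      rw [hπR, Subgroup.isFiniteRelIndex_iff_finiteIndex, Subgroup.subgroupOf,
        Subgroup.comap_map_eq_self_of_injective f.ker.subtype_injective]
      exact hker.finiteIndex_solvableRadical
    rw [QuotientGroup.ker_lift]
    exact finite_map_of_isFiniteRelIndex_ker π f.ker
  have hsolvable : Group.IsSolvable π.ker := by
    have := hker.isSolvable_solvableRadical
    rw [hπR]
    exact isSolvable_map f.ker.subtype (solvableRadical f.ker)
  exact of_isSolvable_ker π (of_finite_ker (QuotientGroup.lift R f hRf) hH)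

end IsVirtuallySolvable

/-- an extension of a virtually solvable group by a virtually
solvable group is virtually solvable. -/
theorem stmt_12 (B : Type*) [Group B] (A : Subgroup B) [A.Normal]
    (hA : ∃ H : Subgroup A, H.FiniteIndex ∧ IsSolvable H)
    (hQ : ∃ H : Subgroup (B ⧸ A), H.FiniteIndex ∧ IsSolvable H) :
    ∃ H : Subgroup B, H.FiniteIndex ∧ IsSolvable H := by
  have hker : IsVirtuallySolvable (QuotientGroup.mk' A).ker := by
    rwa [QuotientGroup.ker_mk']
  exact IsVirtuallySolvable.of_ker (QuotientGroup.mk' A) hker hQ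
end

section
/- Let X be a topological space and S a finite set of functions X → ℝ. For a finite set T of functions put M_T(x) = ∑_{f ∈ T} |f(x)|, and let S⁺ = {f ∈ S | f is not little-o of M_S along the cocompact filter of X} be the set of dominating functions of S. Then M_S and M_{S⁺} have the same order along the cocompact filter of X: each is big-O of the other along the cocompact filter of X. -/
open Filter Asymptotics
open scoped Classical

section SumNorm

variable {α ι : Type*} {E : ι → Type*} [∀ i, SeminormedAddCommGroup (E i)]
  {l : Filter α} {f : ∀ i, α → E i} {s t : Finset ι}

theorem isBigO_sum_norm_of_subset (hst : s ⊆ t) :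
    (fun x => ∑ i ∈ s, ‖f i x‖) =O[l] fun x => ∑ i ∈ t, ‖f i x‖ := by
  refine IsBigO.of_norm_le fun x => ?_
  rw [Real.norm_of_nonneg (Finset.sum_nonneg fun i _ => norm_nonneg (f i x))]
  exact Finset.sum_le_sum_of_subset_of_nonneg hst fun i _ _ => norm_nonneg (f i x)

theorem isBigO_sum_norm_of_isLittleO_of_notMem (hst : s ⊆ t)
    (hf : ∀ i ∈ t, i ∉ s → f i =o[l] fun x => ∑ j ∈ t, ‖f j x‖) :
    (fun x => ∑ i ∈ t, ‖f i x‖) =O[l] fun x => ∑ i ∈ s, ‖f i x‖ := by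
  have omitted : (fun x => ∑ i ∈ t \ s, ‖f i x‖) =o[l] fun x => ∑ i ∈ t, ‖f i x‖ :=
    IsLittleO.fun_sum fun i hi =>
      (hf i (Finset.mem_sdiff.mp hi).1 (Finset.mem_sdiff.mp hi).2).norm_left
  -- Removing a part that is little-o of the whole does not lower the order of the whole.
  refine omitted.right_isBigO_sub.congr_right fun x => ?_
  exact sub_eq_of_eq_add' (Finset.sum_sdiff hst).symm

theorem stmt_13_general (l : Filter α) (f : ∀ i, α → E i) (s : Finset ι) :
    (fun x => ∑ i ∈ s, ‖f i x‖) =Θ[l]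
      fun x => ∑ i ∈ s.filter (fun i => ¬ (f i =o[l] fun x => ∑ j ∈ s, ‖f j x‖)), ‖f i x‖ := by
  refine ⟨isBigO_sum_norm_of_isLittleO_of_notMem (Finset.filter_subset _ s) fun i hi hi' => ?_,
    isBigO_sum_norm_of_subset (Finset.filter_subset _ s)⟩
  by_contra hdom
  exact hi' (Finset.mem_filter.mpr ⟨hi, hdom⟩)

end SumNorm

/-- for a finite set `S` of real functions on a topological space
`X`, with `M_T x = ∑ f ∈ T, |f x|` and `S⁺ ⊆ S` the subset of functions that are
not little-o of `M_S` along the cocompact filter (the dominating functions),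
`M_S` and `M_{S⁺}` have the same order along the cocompact filter of `X`. -/
theorem stmt_13 (X : Type*) [TopologicalSpace X] (S : Finset (X → ℝ)) :
    ((fun x : X => ∑ f ∈ S, |f x|) =O[cocompact X]
      fun x : X => ∑ f ∈ S.filter
        (fun f => ¬ (f =o[cocompact X] fun x : X => ∑ g ∈ S, |g x|)), |f x|) ∧
    ((fun x : X => ∑ f ∈ S.filter
        (fun f => ¬ (f =o[cocompact X] fun x : X => ∑ g ∈ S, |g x|)), |f x|)
      =O[cocompact X] fun x : X => ∑ f ∈ S, |f x|) :=
  stmt_13_general (cocompact X) (fun f : X → ℝ => f) S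
end

section
/- Let s ≥ 1 and let t ∈ ℝ satisfy 0 < t and s · t < 1. Then the function X ∈ ℝ^s ↦ ∑_i exp(X_i − t · ∑_j X_j) + exp(−t · ∑_j X_j) tends to +∞ along the cocompact filter of ℝ^s; that is, it is a proper function on ℝ^s going to +∞ as ‖X‖ → ∞. -/
/-!
The exponents `X i - ∑ j, w j * X j` and `-∑ j, w j * X j` are the coordinates `X i` and the
extra coordinate `0`, each minus their common weighted mean, where the coordinate `0` carries the
missing weight `1 - ∑ j, w j`. Hence their own weighted mean vanishes, so if they are all at
most `M`, then each one is also bounded below by a multiple of `-M`. Since `X i` is a difference of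
two exponents, boundedness of the sum of exponentials therefore forces boundedness of `X`.
-/

open Filter

section WeightedMean

variable {κ : Type*} [Fintype κ] {w : κ → ℝ}

theorem abs_weight_mul_le_of_weighted_sum_nonneg {y : κ → ℝ} {M : ℝ} (hw : ∀ k, 0 ≤ w k)
    (hw_sum : ∑ k, w k = 1) (hy : 0 ≤ ∑ k, w k * y k) (hyM : ∀ k, y k ≤ M) (k : κ) :
    |w k * y k| ≤ M := by
  have sum_gap : ∑ j, w j * (M - y j) = M - ∑ j, w j * y j := by
    simp only [mul_sub, Finset.sum_sub_distrib, ← Finset.sum_mul, hw_sum, one_mul]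
  have gap_nonneg (j : κ) : 0 ≤ w j * (M - y j) := mul_nonneg (hw j) (sub_nonneg.2 (hyM j))
  have gap_le : w k * (M - y k) ≤ M - ∑ j, w j * y j :=
    sum_gap ▸ Finset.single_le_sum (fun j _ ↦ gap_nonneg j) (Finset.mem_univ k)
  have weight_le_one : w k ≤ 1 :=
    hw_sum ▸ Finset.single_le_sum (fun j _ ↦ hw j) (Finset.mem_univ k)
  have M_nonneg : 0 ≤ M := by linarith [gap_nonneg k]
  have weight_mul_nonneg : 0 ≤ w k * M := mul_nonneg (hw k) M_nonneg
  have weight_mul_le : w k * M ≤ M := mul_le_of_le_one_left M_nonneg weight_le_one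
  rw [abs_le]
  constructor <;> linarith [gap_nonneg k]

theorem le_sum_exp (y : κ → ℝ) (k : κ) : y k ≤ ∑ j, Real.exp (y j) :=
  calc
    y k ≤ Real.exp (y k) := (le_add_of_nonneg_right zero_le_one).trans (Real.add_one_le_exp _)
    _ ≤ ∑ j, Real.exp (y j) :=
      Finset.single_le_sum (fun j _ ↦ (Real.exp_pos (y j)).le) (Finset.mem_univ k)

theorem norm_le_norm_inv_weight_mul_sum_exp {y : κ → ℝ} (hw : ∀ k, 0 < w k)
    (hw_sum : ∑ k, w k = 1) (hy : 0 ≤ ∑ k, w k * y k) :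
    ‖y‖ ≤ ‖w⁻¹‖ * ∑ k, Real.exp (y k) := by
  have weighted_norm_le : ‖w * y‖ ≤ ∑ k, Real.exp (y k) :=
    (pi_norm_le_iff_of_nonneg (Finset.sum_nonneg fun k _ ↦ (Real.exp_pos (y k)).le)).2
      (abs_weight_mul_le_of_weighted_sum_nonneg (fun k ↦ (hw k).le) hw_sum hy (le_sum_exp y))
  calc
    ‖y‖ = ‖w⁻¹ * (w * y)‖ := by
      congr 1
      ext k
      exact (inv_mul_cancel_left₀ (hw k).ne' (y k)).symm
    _ ≤ ‖w⁻¹‖ * ‖w * y‖ := norm_mul_le _ _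
    _ ≤ ‖w⁻¹‖ * ∑ k, Real.exp (y k) := by gcongr

theorem tendsto_sum_exp_atTop_of_weighted_sum_nonneg {α : Type*} {l : Filter α} {y : α → κ → ℝ}
    (hw : ∀ k, 0 < w k) (hw_sum : ∑ k, w k = 1) (hy : ∀ a, 0 ≤ ∑ k, w k * y a k)
    (hy_tendsto : Tendsto y l (cocompact (κ → ℝ))) :
    Tendsto (fun a ↦ ∑ k, Real.exp (y a k)) l atTop := by
  obtain ⟨k, -, -⟩ := Finset.exists_ne_zero_of_sum_ne_zero (hw_sum ▸ one_ne_zero)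
  have norm_inv_pos : 0 < ‖w⁻¹‖ :=
    (norm_pos_iff.2 (inv_ne_zero (hw k).ne')).trans_le (norm_le_pi_norm w⁻¹ k)
  exact (tendsto_const_mul_atTop_of_pos norm_inv_pos).1 <|
    tendsto_atTop_mono (fun a ↦ norm_le_norm_inv_weight_mul_sum_exp hw hw_sum (hy a))
      ((tendsto_norm_cocompact_atTop (E := κ → ℝ)).comp hy_tendsto)

end WeightedMean

section Deviation

variable {ι : Type*} [Fintype ι] (w : ι → ℝ)

/-- The weights `w` completed to total mass `1` by giving `none` the missing mass. -/
def completedWeight : Option ι → ℝ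
  | none => 1 - ∑ i, w i
  | some i => w i

/-- The deviations of the point `X`, extended by the coordinate `0` at `none`, from its mean with
respect to `completedWeight w`; the extra coordinate does not contribute to that mean. -/
def deviation (X : ι → ℝ) : Option ι → ℝ
  | none => -∑ j, w j * X j
  | some i => X i - ∑ j, w j * X j

theorem sum_completedWeight : ∑ k, completedWeight w k = 1 := by
  simp only [Fintype.sum_option, completedWeight, sub_add_cancel]

theorem completedWeight_pos {w : ι → ℝ} (hw : ∀ i, 0 < w i) (hw_sum : ∑ i, w i < 1) :
    ∀ k, 0 < completedWeight w k
  | none => sub_pos.2 hw_sum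
  | some i => hw i

theorem sum_completedWeight_mul_deviation (X : ι → ℝ) :
    ∑ k, completedWeight w k * deviation w X k = 0 := by
  simp only [Fintype.sum_option, completedWeight, deviation, mul_sub, Finset.sum_sub_distrib,
    ← Finset.sum_mul]
  ring

theorem continuous_deviation : Continuous (deviation w) := by
  refine continuous_pi fun k ↦ ?_
  cases k <;> simp only [deviation] <;> fun_prop

theorem isClosedEmbedding_deviation : Topology.IsClosedEmbedding (deviation w) := by
  have recover : Function.LeftInverse (fun (y : Option ι → ℝ) i ↦ y (some i) - y none)
      (deviation w) := fun X ↦ by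
    ext i
    simp only [deviation, sub_neg_eq_add, sub_add_cancel]
  exact recover.isClosedEmbedding (by fun_prop) (continuous_deviation w)

end Deviation

theorem stmt_15_general {ι : Type*} [Fintype ι] (w : ι → ℝ) (hw : ∀ i, 0 < w i)
    (hw_sum : ∑ i, w i < 1) :
    Tendsto
      (fun X : ι → ℝ =>
        (∑ i, Real.exp (X i - ∑ j, w j * X j)) + Real.exp (-∑ j, w j * X j))
      (cocompact (ι → ℝ)) atTop := by
  have sum_exp_deviation : Tendsto (fun X ↦ ∑ k, Real.exp (deviation w X k))
      (cocompact (ι → ℝ)) atTop :=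
    tendsto_sum_exp_atTop_of_weighted_sum_nonneg (completedWeight_pos hw hw_sum)
      (sum_completedWeight w) (fun X ↦ (sum_completedWeight_mul_deviation w X).ge)
      (isClosedEmbedding_deviation w).tendsto_cocompact
  simpa only [Fintype.sum_option, deviation, add_comm] using sum_exp_deviation

/-- for `s ≥ 1` and `0 < t` with `s·t < 1`, the function
`X ↦ ∑ i, exp (X i − t ∑ j, X j) + exp (−t ∑ j, X j)` is proper on `ℝˢ`, going
to `+∞` along the cocompact filter. -/
theorem stmt_15 (s : ℕ) (hs : 1 ≤ s) (t : ℝ) (ht : 0 < t) (hst : (s : ℝ) * t < 1) :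
    Tendsto
      (fun X : Fin s → ℝ =>
        (∑ i, Real.exp (X i - t * ∑ j, X j)) + Real.exp (-(t * ∑ j, X j)))
      (cocompact (Fin s → ℝ)) atTop := by
  simpa only [Finset.mul_sum] using
    stmt_15_general (fun _ : Fin s ↦ t) (fun _ ↦ ht) (by simpa using hst)
end

section
/- Let k ≥ 1 and let J ∈ GL(k,ℝ) be the unipotent single Jordan block, i.e. the k×k matrix with 1 on the diagonal, 1 on the superdiagonal, and 0 elsewhere. Then there exists a sharp open convex cone C ⊆ ℝ^k with J · C = C if and only if k is odd. -/
/-!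
Write `J = 1 + N`. If `x` lies in a `J`-invariant cone `C`, then `Jⁿ x = ∑ j, n.choose j • N ^ j x`
grows in the direction of `N ^ d x`, where `N ^ d` is the last nonzero power of `N`, so `N ^ d x` is
in the closure of `C`. The same argument for `J⁻¹`, whose nilpotent part has `d`-th power
`(-1) ^ d • N ^ d`, puts `(-1) ^ d • N ^ d x` there. When `d = k - 1` is odd, the closure thus
contains the line through `N ^ d x`, which is nonzero for some `x` because `C` is open.

Conversely, read `x` as the polynomial `∑ i, x i • t.choose i`. By Pascal's rule `J` becomes the
shift `p(t) ↦ p(t + 1)` on polynomials of degree `< k`, and the shift preserves the cone of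
polynomials that are nonnegative on `ℝ`. That cone contains no line, and for odd `k` it spans the
space, because `X ^ (2 * i) * (X + 1) ^ 2` is nonnegative; hence its interior is nonempty.
-/

open Filter Topology Polynomial Pointwise

section Unipotent

variable {R : Type*} [Ring R]

theorem isUnit_of_isNilpotent_sub_one {a : R} (ha : IsNilpotent (a - 1)) : IsUnit a := by
  simpa using ha.isUnit_one_add

theorem units_inv_sub_one_pow_of_pow_succ_eq_zero {u : Rˣ} {d : ℕ}
    (hu : ((u : R) - 1) ^ (d + 1) = 0) :
    ((↑u⁻¹ : R) - 1) ^ d = (-1) ^ d * ((u : R) - 1) ^ d := by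
  have inv_sub_one : (↑u⁻¹ : R) - 1 = -1 * ((u : R) - 1) * ↑u⁻¹ := by simp [sub_mul]
  have comm : Commute (-1 * ((u : R) - 1)) ↑u⁻¹ :=
    (Commute.neg_one_left _).mul_left
      (((Commute.refl (u : R)).sub_left (Commute.one_left _)).units_inv_right)
  have absorb_u : ((u : R) - 1) ^ d * u = ((u : R) - 1) ^ d := by
    rw [← sub_eq_zero, ← mul_sub_one, ← pow_succ, hu]
  have absorb_inv (n : ℕ) : ((u : R) - 1) ^ d * (↑u⁻¹ : R) ^ n = ((u : R) - 1) ^ d := by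
    induction n with
    | zero => simp
    | succ n ih => rw [pow_succ, ← mul_assoc, ih, Units.mul_inv_eq_iff_eq_mul, absorb_u]
  rw [inv_sub_one, comm.mul_pow, (Commute.neg_one_left _).mul_pow, mul_assoc, absorb_inv]

theorem pow_eq_sum_choose_smul_sub_one_pow {a : R} {d n : ℕ} (ha : (a - 1) ^ (d + 1) = 0)
    (hdn : d ≤ n) :
    a ^ n = ∑ j ∈ Finset.range (d + 1), n.choose j • (a - 1) ^ j := by
  conv_lhs => rw [← sub_add_cancel a 1, (Commute.one_right (a - 1)).add_pow]
  simp only [one_pow, mul_one, ← nsmul_eq_mul']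
  refine (Finset.sum_subset (Finset.range_mono (by lia)) fun j _ hj => ?_).symm
  rw [pow_eq_zero_of_le (by simpa using hj) ha, smul_zero]

end Unipotent

theorem tendsto_choose_div_choose_atTop_nhds_zero {j d : ℕ} (hjd : j < d) :
    Tendsto (fun n : ℕ => (n.choose j / n.choose d : ℝ)) atTop (𝓝 0) := by
  have isLittleO_choose : (fun n : ℕ => (n.choose j : ℝ)) =o[atTop] fun n => (n.choose d : ℝ) :=
    (isTheta_choose j).trans_isLittleO <|
      ((Asymptotics.isLittleO_pow_pow_atTop_of_lt hjd).comp_tendsto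
        tendsto_natCast_atTop_atTop).trans_isTheta (isTheta_choose d).symm
  exact isLittleO_choose.tendsto_div_nhds_zero

section InvariantCone

variable {E : Type*} [AddCommGroup E] [Module ℝ E] [TopologicalSpace E] [IsTopologicalAddGroup E]
  [ContinuousSMul ℝ E]

theorem tendsto_inv_choose_smul_pow_apply {T : Module.End ℝ E} {d : ℕ}
    (hT : (T - 1) ^ (d + 1) = 0) (x : E) :
    Tendsto (fun n : ℕ => (n.choose d : ℝ)⁻¹ • (T ^ n) x) atTop (𝓝 (((T - 1) ^ d) x)) := by
  have lower_terms : Tendsto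
      (fun n : ℕ => ∑ j ∈ Finset.range d, (n.choose j / n.choose d : ℝ) • ((T - 1) ^ j) x)
      atTop (𝓝 0) := by
    have h := tendsto_finsetSum (Finset.range d) fun j hj =>
      (tendsto_choose_div_choose_atTop_nhds_zero (Finset.mem_range.1 hj)).smul_const
        (((T - 1) ^ j) x)
    simpa using h
  have h := lower_terms.add_const (((T - 1) ^ d) x)
  rw [zero_add] at h
  refine h.congr' ?_
  filter_upwards [eventually_ge_atTop d] with n hdn
  have choose_ne_zero : (n.choose d : ℝ) ≠ 0 := mod_cast (Nat.choose_pos hdn).ne'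
  rw [pow_eq_sum_choose_smul_sub_one_pow hT hdn, Finset.sum_range_succ]
  simp [LinearMap.sum_apply, Finset.smul_sum, ← Nat.cast_smul_eq_nsmul ℝ, smul_smul,
    choose_ne_zero, div_eq_inv_mul]

theorem sub_one_pow_apply_mem_closure {T : Module.End ℝ E} {d : ℕ} (hT : (T - 1) ^ (d + 1) = 0)
    {C : ConvexCone ℝ E} (hC : Set.MapsTo T C C) {x : E} (hx : x ∈ C) :
    ((T - 1) ^ d) x ∈ C.closure := by
  refine mem_closure_of_tendsto (tendsto_inv_choose_smul_pow_apply hT x) ?_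
  filter_upwards [eventually_ge_atTop d] with n hdn
  have pow_mem : (T ^ n) x ∈ C := by
    rw [Module.End.pow_apply]
    exact hC.iterate n hx
  exact C.smul_mem (inv_pos.2 (mod_cast Nat.choose_pos hdn)) pow_mem

theorem exists_mem_apply_ne_zero_of_isOpen {C : Set E} (hne : C.Nonempty) (hopen : IsOpen C)
    {F : Type*} [AddCommGroup F] [Module ℝ F] {f : E →ₗ[ℝ] F} (hf : f ≠ 0) :
    ∃ x ∈ C, f x ≠ 0 := by
  by_contra! h
  refine hf (LinearMap.ker_eq_top.1 (Submodule.eq_top_of_nonempty_interior' _ ?_))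
  exact hne.mono (interior_maximal h hopen)

theorem exists_line_subset_closure_of_unipotent {T : Module.End ℝ E} {d : ℕ} (hd : Odd d)
    (hT : (T - 1) ^ (d + 1) = 0) (hTd : (T - 1) ^ d ≠ 0) {C : ConvexCone ℝ E}
    (hne : (C : Set E).Nonempty) (hopen : IsOpen (C : Set E)) (hC : T '' C = C) :
    ∃ x v : E, v ≠ 0 ∧ ∀ t : ℝ, x + t • v ∈ closure (C : Set E) := by
  obtain ⟨u, rfl⟩ := isUnit_of_isNilpotent_sub_one ⟨d + 1, hT⟩
  have inv_sub_one_pow : ((↑u⁻¹ : Module.End ℝ E) - 1) ^ d = -((u : Module.End ℝ E) - 1) ^ d := by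
    rw [units_inv_sub_one_pow_of_pow_succ_eq_zero hT, hd.neg_one_pow, neg_one_mul]
  have inv_unipotent : ((↑u⁻¹ : Module.End ℝ E) - 1) ^ (d + 1) = 0 := by
    rw [units_inv_sub_one_pow_of_pow_succ_eq_zero (by rw [pow_succ, hT, zero_mul]), hT, mul_zero]
  have mapsTo_inv : Set.MapsTo (↑u⁻¹ : Module.End ℝ E) C C := by
    rw [Set.mapsTo_iff_image_subset, ← hC, Set.image_image]
    simp [← Module.End.mul_apply, hC]
  obtain ⟨x, hx, hv⟩ := exists_mem_apply_ne_zero_of_isOpen hne hopen hTd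
  set v := (((u : Module.End ℝ E) - 1) ^ d) x
  have v_mem : v ∈ C.closure :=
    sub_one_pow_apply_mem_closure hT (Set.mapsTo_iff_image_subset.2 hC.subset) hx
  have neg_v_mem : -v ∈ C.closure := by
    simpa [inv_sub_one_pow] using sub_one_pow_apply_mem_closure inv_unipotent mapsTo_inv hx
  refine ⟨0, v, hv, fun t => ?_⟩
  rw [zero_add]
  rcases lt_trichotomy t 0 with ht | rfl | ht
  · simpa using C.closure.smul_mem (neg_pos.2 ht) neg_v_mem
  · simpa using C.closure.add_mem v_mem neg_v_mem
  · exact C.closure.smul_mem ht v_mem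

end InvariantCone

theorem smul_mem_interior_of_pos {E : Type*} [AddCommGroup E] [Module ℝ E] [TopologicalSpace E]
    [ContinuousConstSMul ℝ E] {K : PointedCone ℝ E} {t : ℝ} (ht : 0 < t)
    {x : E} (hx : x ∈ interior (K : Set E)) :
    t • x ∈ interior (K : Set E) := by
  have smul_subset : t • (K : Set E) ⊆ K := Set.smul_set_subset_iff.2 fun _ => K.smul_mem ht.le
  exact interior_mono smul_subset (interior_smul₀ ht.ne' (K : Set E) ▸ Set.smul_mem_smul_set hx)

section ClosedCone

variable {E : Type*} [AddCommGroup E] [Module ℝ E] [TopologicalSpace E] [IsTopologicalAddGroup E]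
  [ContinuousSMul ℝ E]

theorem mem_of_forall_nonneg_add_smul_mem {K : PointedCone ℝ E} (hK : IsClosed (K : Set E))
    {x v : E} (h : ∀ t : ℝ, 0 ≤ t → x + t • v ∈ K) : v ∈ K := by
  have tendsto_v : Tendsto (fun t : ℝ => t⁻¹ • (x + t • v)) atTop (𝓝 v) := by
    have h := ((tendsto_inv_atTop_zero (𝕜 := ℝ)).smul_const x).add_const v
    rw [zero_smul, zero_add] at h
    refine h.congr' ?_
    filter_upwards [eventually_ne_atTop 0] with t ht
    rw [smul_add, inv_smul_smul₀ ht]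
  refine hK.mem_of_tendsto tendsto_v ?_
  filter_upwards [eventually_ge_atTop 0] with t ht
  exact K.smul_mem (inv_nonneg.2 ht) (h t ht)

theorem mem_lineal_of_forall_add_smul_mem {K : PointedCone ℝ E} (hK : IsClosed (K : Set E))
    {x v : E} (h : ∀ t : ℝ, x + t • v ∈ K) : v ∈ K.lineal :=
  ⟨mem_of_forall_nonneg_add_smul_mem hK fun t _ => h t,
    mem_of_forall_nonneg_add_smul_mem hK fun t _ => by simpa using h (-t)⟩

theorem not_exists_line_subset_closure_interior {K : PointedCone ℝ E}
    (hK : IsClosed (K : Set E)) (hlineal : K.lineal = ⊥) :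
    ¬ ∃ x v : E, v ≠ 0 ∧ ∀ t : ℝ, x + t • v ∈ closure (interior (K : Set E)) := by
  rintro ⟨x, v, hv, hline⟩
  have v_mem : v ∈ K.lineal := mem_lineal_of_forall_add_smul_mem hK fun t =>
    closure_minimal interior_subset hK (hline t)
  rw [hlineal] at v_mem
  exact hv v_mem

theorem image_interior_eq_of_preimage_eq [T2Space E] [FiniteDimensional ℝ E] {T : Module.End ℝ E}
    (hT : Function.Surjective T) {s : Set E} (hs : T ⁻¹' s = s) :
    T '' interior s = interior s := by
  have preimage_interior : T ⁻¹' interior s = interior s := by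
    rw [(T.isOpenMap_of_finiteDimensional hT).preimage_interior_eq_interior_preimage
      T.continuous_of_finiteDimensional, hs]
  simpa only [preimage_interior] using Set.image_preimage_eq (interior s) hT

end ClosedCone

theorem interior_nonempty_of_span_eq_top {E : Type*} [NormedAddCommGroup E] [NormedSpace ℝ E]
    [FiniteDimensional ℝ E] {K : PointedCone ℝ E} (hK : Submodule.span ℝ (K : Set E) = ⊤) :
    (interior (K : Set E)).Nonempty := by
  rw [K.convex.interior_nonempty_iff_affineSpan_eq_top, ← Set.insert_eq_of_mem K.zero_mem,
    ← AffineSubspace.coe_eq_univ_iff, affineSpan_insert_zero, hK, Submodule.top_coe]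

section JordanBlock

variable (R : Type*) [Ring R] (k : ℕ)

/-- The `k × k` Jordan block with eigenvalue `1`. -/
def unipotentJordanBlock : Matrix (Fin k) (Fin k) R :=
  Matrix.of fun i j => if i = j then 1 else if (j : ℕ) = i + 1 then 1 else 0

theorem unipotentJordanBlock_apply (i j : Fin k) :
    unipotentJordanBlock R k i j =
      (if i = j then 1 else 0) + if (j : ℕ) = i + 1 then 1 else 0 := by
  simp only [unipotentJordanBlock, Matrix.of_apply]
  split_ifs <;> simp_all

theorem unipotentJordanBlock_sub_one_pow (m : ℕ) :
    (unipotentJordanBlock R k - 1) ^ m =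
      Matrix.of fun i j : Fin k => if (j : ℕ) = i + m then 1 else 0 := by
  induction m with
  | zero => ext i j; simp [Matrix.one_apply, Fin.ext_iff, eq_comm]
  | succ m ih =>
    ext i j
    simp only [pow_succ, ih, Matrix.mul_apply, Matrix.sub_apply, Matrix.one_apply,
      unipotentJordanBlock_apply, add_sub_cancel_left, Matrix.of_apply, ite_mul, one_mul, zero_mul]
    by_cases hj : (j : ℕ) = i + (m + 1)
    · rw [if_pos hj, Finset.sum_eq_single ⟨i + m, by lia⟩] <;> simp [Fin.ext_iff] <;> lia
    · rw [if_neg hj]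
      refine Finset.sum_eq_zero fun l _ => ?_
      rw [ite_eq_right_iff, ite_eq_right_iff]
      lia

theorem unipotentJordanBlock_sub_one_pow_self : (unipotentJordanBlock R k - 1) ^ k = 0 := by
  ext i j
  simp [unipotentJordanBlock_sub_one_pow, show (j : ℕ) ≠ i + k by lia]

theorem unipotentJordanBlock_succ_sub_one_pow_ne_zero [Nontrivial R] (d : ℕ) :
    (unipotentJordanBlock R (d + 1) - 1) ^ d ≠ 0 := fun h => by
  simpa [unipotentJordanBlock_sub_one_pow] using congrFun₂ h 0 (Fin.last d)

end JordanBlock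

theorem toLinAlgEquiv'_sub_one_pow {R n : Type*} [CommRing R] [Fintype n] [DecidableEq n]
    (A : Matrix n n R) (m : ℕ) :
    (Matrix.toLinAlgEquiv' A - 1) ^ m = Matrix.toLinAlgEquiv' ((A - 1) ^ m) := by
  rw [map_pow, map_sub, map_one]

section NewtonBasis

variable (F : Type*) [Field F] [CharZero F]

/-- Newton's basis of the polynomials, `t.choose i = t (t - 1) ⋯ (t - i + 1) / i!`; it turns the
shift by `1` into a Jordan block. -/
noncomputable def binomialSequence : Polynomial.Sequence F where
  elems' i := C (i.factorial : F)⁻¹ * descPochhammer F i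
  degree_eq' i := by
    rw [degree_C_mul (inv_ne_zero (mod_cast i.factorial_ne_zero)),
      degree_eq_natDegree (monic_descPochhammer F i).ne_zero, descPochhammer_natDegree]

theorem taylor_one_binomialSequence_zero :
    taylor 1 (binomialSequence F 0) = binomialSequence F 0 := by
  simp [binomialSequence]

theorem taylor_one_binomialSequence_succ (i : ℕ) :
    taylor 1 (binomialSequence F (i + 1)) = binomialSequence F (i + 1) + binomialSequence F i := by
  have taylor_descPochhammer : taylor 1 (descPochhammer F (i + 1)) =
      descPochhammer F (i + 1) + (i + 1 : F[X]) * descPochhammer F i := by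
    have h := congrArg (taylor 1) (descPochhammer_succ_comp_X_sub_one F i)
    simp only [smul_eq_mul, map_sub, taylor_mul, map_add, taylor_one, map_one] at h
    simp only [taylor_apply, comp_assoc, sub_comp, X_comp, one_comp, map_one,
      add_sub_cancel_right, comp_X, natCast_comp] at h ⊢
    linear_combination -h
  have inv_factorial : ((i + 1).factorial : F)⁻¹ * (i + 1) = (i.factorial : F)⁻¹ := by
    have : (i : F) + 1 ≠ 0 := i.cast_add_one_ne_zero
    rw [Nat.factorial_succ]
    push_cast
    field_simp
  have h := congrArg (C : F → F[X]) inv_factorial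
  simp only [map_mul, map_add, map_natCast, map_one] at h
  simp only [binomialSequence, taylor_mul, taylor_C, taylor_descPochhammer]
  linear_combination descPochhammer F i * h

/-- The vector `x`, read as coefficients of a polynomial in Newton's basis `t.choose i`. -/
noncomputable def newtonSum (k : ℕ) : (Fin k → F) →ₗ[F] F[X] :=
  Fintype.linearCombination F fun i : Fin k => binomialSequence F i

theorem newtonSum_injective (k : ℕ) : Function.Injective (newtonSum F k) :=
  ((binomialSequence F).linearIndependent.comp _
    Fin.val_injective).fintypeLinearCombination_injective

theorem range_newtonSum (k : ℕ) : LinearMap.range (newtonSum F k) = degreeLT F k := by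
  rw [newtonSum, Fintype.range_linearCombination, ← (binomialSequence F).span_degreeLT
    fun i _ => (leadingCoeff_ne_zero.2 ((binomialSequence F).ne_zero i)).isUnit,
    ← Fin.range_val, ← Set.range_comp]
  rfl

theorem sum_unipotentJordanBlock_smul_binomialSequence {k : ℕ} (j : Fin k) :
    ∑ i : Fin k, unipotentJordanBlock F k i j • binomialSequence F i =
      taylor 1 (binomialSequence F j) := by
  simp only [unipotentJordanBlock_apply, add_smul, ite_smul, one_smul, zero_smul,
    Finset.sum_add_distrib, Finset.sum_ite_eq', Finset.mem_univ, if_true]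
  cases k with
  | zero => exact j.elim0
  | succ d =>
    cases j using Fin.cases with
    | zero => simp [taylor_one_binomialSequence_zero]
    | succ l =>
      rw [Fin.val_succ, taylor_one_binomialSequence_succ, add_right_inj,
        Finset.sum_eq_single l.castSucc (fun i _ hi => if_neg ?_) (by simp)]
      · simp
      · rw [Ne, Fin.ext_iff, Fin.val_castSucc] at hi
        lia

theorem newtonSum_unipotentJordanBlock_mulVec (k : ℕ) (x : Fin k → F) :
    newtonSum F k ((unipotentJordanBlock F k).mulVec x) = taylor 1 (newtonSum F k x) := by
  simp only [newtonSum, Fintype.linearCombination_apply, map_sum, map_smul,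
    ← sum_unipotentJordanBlock_smul_binomialSequence, Matrix.mulVec, dotProduct, Finset.sum_smul,
    Finset.smul_sum, smul_smul]
  rw [Finset.sum_comm]
  simp only [mul_comm]

end NewtonBasis

/-- The real polynomials that are nonnegative on the whole line. -/
def nonnegPolynomialCone : PointedCone ℝ ℝ[X] where
  carrier := {p | ∀ t : ℝ, 0 ≤ p.eval t}
  add_mem' hp hq t := by simpa using add_nonneg (hp t) (hq t)
  zero_mem' := by simp
  smul_mem' c p hp t := by
    rw [eval_smul]
    exact smul_nonneg c.2 (hp t)

theorem lineal_nonnegPolynomialCone : nonnegPolynomialCone.lineal = ⊥ :=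
  (Submodule.eq_bot_iff _).2 fun p ⟨hp, hneg⟩ => Polynomial.funext fun t =>
    le_antisymm (by simpa using hneg t) (by simpa using hp t)

theorem taylor_mem_nonnegPolynomialCone_iff {p : ℝ[X]} (r : ℝ) :
    taylor r p ∈ nonnegPolynomialCone ↔ p ∈ nonnegPolynomialCone := by
  change (∀ t, 0 ≤ (taylor r p).eval t) ↔ ∀ t, 0 ≤ p.eval t
  simp only [taylor_eval]
  exact ((add_right_surjective r).forall (p := fun t => 0 ≤ p.eval t)).symm

theorem X_pow_mem_span_nonnegPolynomialCone_inter_degreeLT {m n : ℕ} (hn : n < 2 * m + 1) :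
    (X ^ n : ℝ[X]) ∈
      Submodule.span ℝ ((nonnegPolynomialCone : Set ℝ[X]) ∩ degreeLT ℝ (2 * m + 1)) := by
  have even_mem {i : ℕ} (hi : i ≤ m) : (X ^ (2 * i) : ℝ[X]) ∈
      Submodule.span ℝ ((nonnegPolynomialCone : Set ℝ[X]) ∩ degreeLT ℝ (2 * m + 1)) := by
    refine Submodule.subset_span ⟨fun t => ?_, mem_degreeLT.2 ?_⟩
    · rw [pow_mul]
      simp only [eval_pow, eval_X]
      positivity
    · rw [degree_X_pow]
      exact_mod_cast (by lia : 2 * i < 2 * m + 1)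
  obtain ⟨i, rfl | rfl⟩ := n.even_or_odd'
  · exact even_mem (by lia)
  have square_mem : (X ^ (2 * i) * (X + 1) ^ 2 : ℝ[X]) ∈
      Submodule.span ℝ ((nonnegPolynomialCone : Set ℝ[X]) ∩ degreeLT ℝ (2 * m + 1)) := by
    refine Submodule.subset_span ⟨fun t => ?_, mem_degreeLT.2 ?_⟩
    · rw [pow_mul]
      simp only [eval_mul, eval_pow, eval_X, eval_add, eval_one]
      positivity
    · have h : (X ^ (2 * i) * (X + 1) ^ 2 : ℝ[X]).degree = (2 * i + 2 : ℕ) := by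
        compute_degree!
      rw [h]
      exact_mod_cast (by lia : 2 * i + 2 < 2 * m + 1)
  have odd_eq : (X ^ (2 * i + 1) : ℝ[X]) =
      (2⁻¹ : ℝ) • (X ^ (2 * i) * (X + 1) ^ 2 - X ^ (2 * (i + 1)) - X ^ (2 * i)) := by
    rw [eq_inv_smul_iff₀ two_ne_zero, two_smul]
    ring
  rw [odd_eq]
  exact Submodule.smul_mem _ _ <| Submodule.sub_mem _
    (Submodule.sub_mem _ square_mem (even_mem (by lia))) (even_mem (by lia))

theorem span_nonnegPolynomialCone_inter_degreeLT (m : ℕ) :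
    Submodule.span ℝ ((nonnegPolynomialCone : Set ℝ[X]) ∩ degreeLT ℝ (2 * m + 1)) =
      degreeLT ℝ (2 * m + 1) := by
  refine le_antisymm (Submodule.span_le.2 Set.inter_subset_right) ?_
  rw [degreeLT_eq_span_X_pow, Submodule.span_le]
  intro p hp
  simp only [Finset.coe_image, Finset.coe_range, Set.mem_image, Set.mem_Iio] at hp
  obtain ⟨n, hn, rfl⟩ := hp
  exact degreeLT_eq_span_X_pow (R := ℝ) ▸ X_pow_mem_span_nonnegPolynomialCone_inter_degreeLT hn

/-- The vectors whose polynomial `newtonSum` is nonnegative on the whole line. -/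
noncomputable def nonnegNewtonCone (k : ℕ) : PointedCone ℝ (Fin k → ℝ) :=
  nonnegPolynomialCone.comap (newtonSum ℝ k)

theorem isClosed_nonnegNewtonCone (k : ℕ) : IsClosed (nonnegNewtonCone k : Set (Fin k → ℝ)) := by
  have : (nonnegNewtonCone k : Set (Fin k → ℝ)) =
      ⋂ t : ℝ, {x | 0 ≤ (leval t ∘ₗ newtonSum ℝ k) x} :=
    Set.ext fun _ => (Set.mem_iInter (s := fun t : ℝ => {x | 0 ≤ (newtonSum ℝ k x).eval t})).symm
  rw [this]
  exact isClosed_iInter fun t =>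
    isClosed_le continuous_const (leval t ∘ₗ newtonSum ℝ k).continuous_of_finiteDimensional

theorem lineal_nonnegNewtonCone (k : ℕ) : (nonnegNewtonCone k).lineal = ⊥ := by
  refine (Submodule.eq_bot_iff _).2 fun x ⟨hx, hneg⟩ => newtonSum_injective ℝ k ?_
  rw [map_zero, ← Submodule.mem_bot ℝ, ← lineal_nonnegPolynomialCone]
  exact ⟨hx, by simpa [nonnegNewtonCone] using hneg⟩

theorem span_nonnegNewtonCone (m : ℕ) :
    Submodule.span ℝ (nonnegNewtonCone (2 * m + 1) : Set (Fin (2 * m + 1) → ℝ)) = ⊤ := by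
  have preimage_eq : (nonnegNewtonCone (2 * m + 1) : Set (Fin (2 * m + 1) → ℝ)) =
      newtonSum ℝ (2 * m + 1) ⁻¹' (nonnegPolynomialCone ∩ degreeLT ℝ (2 * m + 1)) := by
    rw [← range_newtonSum, LinearMap.coe_range, Set.preimage_inter_range]
    rfl
  have inter_subset_range : (nonnegPolynomialCone ∩ degreeLT ℝ (2 * m + 1) : Set ℝ[X]) ⊆
      LinearMap.range (newtonSum ℝ (2 * m + 1)) := by
    rw [range_newtonSum]
    exact Set.inter_subset_right
  rw [preimage_eq, Submodule.span_preimage_eq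
      ⟨0, Set.mem_inter nonnegPolynomialCone.zero_mem (Submodule.zero_mem _)⟩ inter_subset_range,
    span_nonnegPolynomialCone_inter_degreeLT, ← range_newtonSum,
    LinearMap.range_le_iff_comap.1 le_rfl]

theorem preimage_nonnegNewtonCone (k : ℕ) :
    (unipotentJordanBlock ℝ k).mulVec ⁻¹' nonnegNewtonCone k = nonnegNewtonCone k := by
  ext x
  change newtonSum ℝ k _ ∈ nonnegPolynomialCone ↔ newtonSum ℝ k x ∈ nonnegPolynomialCone
  rw [newtonSum_unipotentJordanBlock_mulVec, taylor_mem_nonnegPolynomialCone_iff]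

/-- A convex set closed under positive scaling, bundled as a `ConvexCone`. -/
def convexConeOfConvex {E : Type*} [AddCommGroup E] [Module ℝ E] {C : Set E} (hconv : Convex ℝ C)
    (hcone : ∀ t : ℝ, 0 < t → ∀ x ∈ C, t • x ∈ C) : ConvexCone ℝ E where
  carrier := C
  smul_mem' t ht x hx := hcone t ht x hx
  add_mem' x hx y hy := by
    have midpoint_mem : (1 / 2 : ℝ) • x + (1 / 2 : ℝ) • y ∈ C :=
      hconv hx hy one_half_pos.le one_half_pos.le (add_halves 1)
    simpa [smul_add] using hcone 2 two_pos _ midpoint_mem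

/-- the unipotent single Jordan block of size `k` preserves a
sharp open convex cone of `ℝᵏ` iff `k` is odd. -/
theorem stmt_16 (k : ℕ) (hk : 1 ≤ k) :
    (∃ C : Set (Fin k → ℝ), C.Nonempty ∧ IsOpen C ∧ Convex ℝ C ∧
      (∀ t : ℝ, 0 < t → ∀ x ∈ C, t • x ∈ C) ∧
      (¬ ∃ x v : Fin k → ℝ, v ≠ 0 ∧ ∀ t : ℝ, x + t • v ∈ closure C) ∧
      (fun x => Matrix.mulVec
        (Matrix.of fun i j : Fin k =>
          if i = j then (1 : ℝ) else if (j : ℕ) = (i : ℕ) + 1 then 1 else 0) x) '' C = C) ↔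
    Odd k := by
  have unipotent : (Matrix.toLinAlgEquiv' (unipotentJordanBlock ℝ k) - 1) ^ k = 0 := by
    rw [toLinAlgEquiv'_sub_one_pow, unipotentJordanBlock_sub_one_pow_self, map_zero]
  constructor
  · rintro ⟨C, hne, hopen, hconv, hcone, hsharp, hC⟩
    by_contra hk_odd
    obtain ⟨d, rfl⟩ := Nat.exists_eq_add_of_le' hk
    have hd : Odd d := by grind
    refine hsharp (exists_line_subset_closure_of_unipotent hd unipotent ?_
      (C := convexConeOfConvex hconv hcone) hne hopen hC)
    rw [toLinAlgEquiv'_sub_one_pow]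
    exact (map_ne_zero_iff _ (AlgEquiv.injective _)).2
      (unipotentJordanBlock_succ_sub_one_pow_ne_zero ℝ d)
  · rintro ⟨m, rfl⟩
    exact ⟨interior (nonnegNewtonCone (2 * m + 1)),
      interior_nonempty_of_span_eq_top (span_nonnegNewtonCone m), isOpen_interior,
      (nonnegNewtonCone _).convex.interior, fun _ ht _ => smul_mem_interior_of_pos ht,
      not_exists_line_subset_closure_interior (isClosed_nonnegNewtonCone _)
        (lineal_nonnegNewtonCone _),
      image_interior_eq_of_preimage_eq
        ((Module.End.isUnit_iff _).1 (isUnit_of_isNilpotent_sub_one ⟨_, unipotent⟩)).surjective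
        (preimage_nonnegNewtonCone _)⟩
end

section
/- Let λ = (1+√2)² and let R be the set of real 2×2 matrices of the form [[λ^n, a + b·√2],[0, 1]] with n, a, b ∈ ℤ. Then R is a subgroup of GL(2,ℝ); R is solvable; and R is not virtually nilpotent, i.e. no finite-index subgroup of R is nilpotent. -/
/-!
On affine matrices `[[y, x], [0, 1]]` the determinant reads off `y`, and its kernel is the abelian
group of translations, which gives solvability.

The `n`-fold iterated commutator of `g = [[1, x], [0, 1]]` with `t = [[y, b], [0, 1]]` is
`[[1, (1 - y) ^ n * x], [0, 1]]`, so a nilpotent group containing `g` and `t` would have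
`(1 - y) ^ n * x = 0` for some `n`. A finite-index subgroup still contains powers of `g` and `t`,
which replaces `x` by a nonzero multiple and `y` by a power. Hence even virtual nilpotency fails in
characteristic zero when `x ≠ 0` and `y` is not a root of unity; in `R` take `x = 1` and `y = λ`.

That `R` is a group at all is due to `1 + √2` being a unit of `ℤ[√2]`: it is the image in
`GL(2, ℝ)` of a group of affine matrices over `ℤ[√2]`.
-/

open Matrix
open scoped MatrixGroups commutatorElement

section IteratedCommutator

variable {G : Type*} [Group G]

theorem iterate_commutator_mem_lowerCentralSeries {H : Subgroup G} {g t : G} (hg : g ∈ H)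
    (ht : t ∈ H) (n : ℕ) : (⁅·, t⁆)^[n] g ∈ H.lowerCentralSeries n := by
  induction n with
  | zero => exact hg
  | succ n ih =>
    rw [Function.iterate_succ_apply']
    exact Subgroup.commutator_mem_commutator ih ht

theorem map_iterate_commutator {G' : Type*} [Group G'] (f : G →* G') (g t : G) (n : ℕ) :
    f ((⁅·, t⁆)^[n] g) = (⁅·, f t⁆)^[n] (f g) :=
  Function.Semiconj.iterate_right (ga := (⁅·, t⁆)) (gb := (⁅·, f t⁆))
    (fun h => map_commutatorElement f h t) n g

theorem exists_iterate_commutator_pow_eq_one (hG : Group.IsVirtuallyNilpotent G) :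
    ∃ k ≠ 0, ∃ n, ∀ g t : G, (⁅·, t ^ k⁆)^[n] (g ^ k) = 1 := by
  obtain ⟨N, hN, hindex⟩ := hG
  obtain ⟨n, hn⟩ := N.isNilpotent_iff_lowerCentralSeries.1 hN
  have pow_mem (g : G) : g ^ N.normalCore.index ∈ N :=
    N.normalCore_le (N.normalCore.pow_index_mem g)
  refine ⟨N.normalCore.index, Subgroup.FiniteIndex.index_ne_zero, n, fun g t => ?_⟩
  rw [← Subgroup.mem_bot, ← hn]
  exact iterate_commutator_mem_lowerCentralSeries (pow_mem g) (pow_mem t) n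

end IteratedCommutator

section AffineMatrix

variable {K : Type*} [CommRing K]

/-- The matrix `[[y, x], [0, 1]]` of the affine map `z ↦ y * z + x`, as an element of
`GL(2, K)`. -/
def affineMatrix (y : Kˣ) (x : K) : GL (Fin 2) K where
  val := !![(y : K), x; 0, 1]
  inv := !![((y⁻¹ : Kˣ) : K), -((y⁻¹ : Kˣ) : K) * x; 0, 1]
  val_inv := by simp [Matrix.one_fin_two]
  inv_val := by simp [Matrix.one_fin_two]

@[simp]
theorem coe_affineMatrix (y : Kˣ) (x : K) :
    (affineMatrix y x : Matrix (Fin 2) (Fin 2) K) = !![(y : K), x; 0, 1] :=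
  rfl

theorem affineMatrix_one_eq_upperRightHom (x : K) :
    affineMatrix 1 x = GeneralLinearGroup.upperRightHom x := by
  ext i j; simp

theorem affineMatrix_one_zero : affineMatrix (1 : Kˣ) 0 = 1 := by
  rw [affineMatrix_one_eq_upperRightHom, AddChar.map_zero_eq_one]

theorem affineMatrix_one_eq_one_iff {x : K} : affineMatrix 1 x = 1 ↔ x = 0 := by
  rw [affineMatrix_one_eq_upperRightHom, ← AddChar.map_zero_eq_one GeneralLinearGroup.upperRightHom,
    GeneralLinearGroup.injective_upperRightHom.eq_iff]

theorem affineMatrix_mul (y y' : Kˣ) (x x' : K) :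
    affineMatrix y x * affineMatrix y' x' = affineMatrix (y * y') (y * x' + x) := by
  apply Units.ext
  simp

theorem affineMatrix_inv (y : Kˣ) (x : K) :
    (affineMatrix y x)⁻¹ = affineMatrix y⁻¹ (-((y⁻¹ : Kˣ) : K) * x) :=
  Units.ext rfl

theorem det_affineMatrix (y : Kˣ) (x : K) : GeneralLinearGroup.det (affineMatrix y x) = y := by
  apply Units.ext
  simp [Matrix.det_fin_two]

theorem map_affineMatrix {L : Type*} [CommRing L] (f : K →+* L) (y : Kˣ) (x : K) :
    GeneralLinearGroup.map f (affineMatrix y x) = affineMatrix (Units.map f y) (f x) := by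
  ext i j
  fin_cases i <;> fin_cases j <;> simp

theorem affineMatrix_pow (y : Kˣ) (x : K) (k : ℕ) :
    affineMatrix y x ^ k = affineMatrix (y ^ k) ((∑ i ∈ Finset.range k, (y : K) ^ i) * x) := by
  induction k with
  | zero => simp [affineMatrix_one_zero]
  | succ k ih =>
    rw [pow_succ, ih, affineMatrix_mul, ← pow_succ, Finset.sum_range_succ, Units.val_pow_eq_pow_val]
    ring_nf

theorem commutator_affineMatrix_one (y : Kˣ) (x b : K) :
    ⁅affineMatrix 1 x, affineMatrix y b⁆ = affineMatrix 1 ((1 - y) * x) := by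
  rw [commutatorElement_def, mul_inv_eq_iff_eq_mul, mul_inv_eq_iff_eq_mul]
  simp only [affineMatrix_mul, one_mul, mul_one, Units.val_one]
  ring_nf

theorem iterate_commutator_affineMatrix_one (y : Kˣ) (x b : K) (n : ℕ) :
    (⁅·, affineMatrix y b⁆)^[n] (affineMatrix 1 x) = affineMatrix 1 ((1 - y) ^ n * x) := by
  induction n with
  | zero => simp
  | succ n ih =>
    rw [Function.iterate_succ_apply', ih, commutator_affineMatrix_one, ← mul_assoc, ← pow_succ']

theorem not_isVirtuallyNilpotent_of_affineMatrix_mem [NoZeroDivisors K] [CharZero K]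
    {Γ : Subgroup (GL (Fin 2) K)} {y : Kˣ} {b x : K} (hy : ¬IsOfFinOrder y) (hx : x ≠ 0)
    (hyΓ : affineMatrix y b ∈ Γ) (hxΓ : affineMatrix 1 x ∈ Γ) :
    ¬Group.IsVirtuallyNilpotent Γ := by
  intro hΓ
  obtain ⟨k, hk, n, hkn⟩ := exists_iterate_commutator_pow_eq_one hΓ
  have iterate_eq_one : (⁅·, affineMatrix y b ^ k⁆)^[n] (affineMatrix 1 x ^ k) = 1 := by
    simpa only [map_iterate_commutator, map_pow, map_one, Subgroup.subtype_apply]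
      using congrArg Γ.subtype (hkn ⟨_, hxΓ⟩ ⟨_, hyΓ⟩)
  have translation_eq_zero : (1 - (y : K) ^ k) ^ n * (k * x) = 0 := by
    simpa [affineMatrix_pow, iterate_commutator_affineMatrix_one, affineMatrix_one_eq_one_iff]
      using iterate_eq_one
  have one_sub_ne_zero : 1 - (y : K) ^ k ≠ 0 := fun h =>
    hy <| isOfFinOrder_iff_pow_eq_one.2
      ⟨k, hk.pos, Units.ext (by simpa using (sub_eq_zero.1 h).symm)⟩
  exact mul_ne_zero (pow_ne_zero n one_sub_ne_zero) (mul_ne_zero (Nat.cast_ne_zero.2 hk) hx)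
    translation_eq_zero

end AffineMatrix

section AffineSubgroup

variable {K : Type*} [CommRing K]

/-- The group of affine matrices `[[y, x], [0, 1]]` over `K` whose linear part `y` lies in the
group `S` of units. -/
def affineSubgroup (S : Subgroup Kˣ) : Subgroup (GL (Fin 2) K) where
  carrier := {g | ∃ y ∈ S, ∃ x, affineMatrix y x = g}
  mul_mem' := by
    rintro _ _ ⟨y, hy, x, rfl⟩ ⟨y', hy', x', rfl⟩
    exact ⟨y * y', mul_mem hy hy', _, (affineMatrix_mul y y' x x').symm⟩
  one_mem' := ⟨1, one_mem S, 0, affineMatrix_one_zero⟩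
  inv_mem' := by
    rintro _ ⟨y, hy, x, rfl⟩
    exact ⟨y⁻¹, inv_mem hy, _, (affineMatrix_inv y x).symm⟩

theorem affineMatrix_mem_affineSubgroup {S : Subgroup Kˣ} {y : Kˣ} (hy : y ∈ S) (x : K) :
    affineMatrix y x ∈ affineSubgroup S :=
  ⟨y, hy, x, rfl⟩

instance isSolvable_affineSubgroup (S : Subgroup Kˣ) : Group.IsSolvable (affineSubgroup S) := by
  let translation : Multiplicative K →* affineSubgroup S :=
    GeneralLinearGroup.upperRightHom.toMonoidHom.codRestrict _ fun x =>
      ⟨1, one_mem S, x.toAdd, affineMatrix_one_eq_upperRightHom _⟩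
  refine Group.isSolvable_of_ker_le_range translation
    (GeneralLinearGroup.det.comp (affineSubgroup S).subtype) ?_
  rintro ⟨_, y, hy, x, rfl⟩ hdet
  obtain rfl : y = 1 := (det_affineMatrix y x).symm.trans hdet
  exact ⟨.ofAdd x, Subtype.ext (affineMatrix_one_eq_upperRightHom x).symm⟩

end AffineSubgroup

section SilverAffineGroup

/-- The unit `1 + √2` of `ℤ[√2]`. -/
def silverUnit : (ℤ√2)ˣ where
  val := ⟨1, 1⟩
  inv := ⟨-1, 1⟩
  val_inv := by decide
  inv_val := by decide

/-- The group `R` of matrices `[[λ ^ n, a + b * √2], [0, 1]]` with `λ = (1 + √2) ^ 2`, encoded as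
the image in `GL(2, ℝ)` of a group of affine matrices over `ℤ[√2]`. -/
noncomputable def silverAffineGroup : Subgroup (GL (Fin 2) ℝ) :=
  (affineSubgroup (Subgroup.zpowers (silverUnit ^ 2))).map
    (GeneralLinearGroup.map (Zsqrtd.toReal zero_le_two))

theorem affineMatrix_mem_silverAffineGroup {y : (ℤ√2)ˣ}
    (hy : y ∈ Subgroup.zpowers (silverUnit ^ 2)) (x : ℤ√2) :
    affineMatrix (Units.map (Zsqrtd.toReal zero_le_two) y) (Zsqrtd.toReal zero_le_two x) ∈
      silverAffineGroup :=
  ⟨_, affineMatrix_mem_affineSubgroup hy x, map_affineMatrix _ _ _⟩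

theorem coe_map_silverUnit :
    (Units.map (Zsqrtd.toReal zero_le_two : ℤ√2 →* ℝ) silverUnit : ℝ) = 1 + √2 := by
  simp [silverUnit]

theorem coe_image_silverAffineGroup :
    (fun g : GL (Fin 2) ℝ => (g : Matrix (Fin 2) (Fin 2) ℝ)) '' silverAffineGroup =
      {M | ∃ n a b : ℤ, M = !![((1 + √2) ^ 2) ^ n, (a : ℝ) + (b : ℝ) * √2; 0, 1]} := by
  have coe_entries (n a b : ℤ) :
      (affineMatrix (Units.map (Zsqrtd.toReal zero_le_two) ((silverUnit ^ 2) ^ n))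
        (Zsqrtd.toReal zero_le_two ⟨a, b⟩) : Matrix (Fin 2) (Fin 2) ℝ) =
        !![((1 + √2) ^ 2) ^ n, (a : ℝ) + (b : ℝ) * √2; 0, 1] := by
    rw [coe_affineMatrix, map_zpow, map_pow, Units.val_zpow_eq_zpow_val, Units.val_pow_eq_pow_val,
      coe_map_silverUnit, Zsqrtd.toReal_apply, Int.cast_two]
  ext M
  constructor
  · rintro ⟨_, ⟨_, ⟨_, ⟨n, rfl⟩, ⟨a, b⟩, rfl⟩, rfl⟩, rfl⟩
    exact ⟨n, a, b, by rw [map_affineMatrix]; exact coe_entries n a b⟩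
  · rintro ⟨n, a, b, rfl⟩
    exact ⟨_, affineMatrix_mem_silverAffineGroup ⟨n, rfl⟩ ⟨a, b⟩, coe_entries n a b⟩

theorem isSolvable_silverAffineGroup : Group.IsSolvable silverAffineGroup :=
  Group.isSolvable_of_surjective (MonoidHom.subgroupMap_surjective _ _)

theorem not_isOfFinOrder_map_silverUnit :
    ¬IsOfFinOrder (Units.map (Zsqrtd.toReal zero_le_two : ℤ√2 →* ℝ) silverUnit) := by
  rw [← Units.isOfFinOrder_val, coe_map_silverUnit]
  intro h
  have one_add_sqrt_eq_one : 1 + √2 = 1 := h.eq_one (by positivity)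
  exact (Real.sqrt_pos.2 zero_lt_two).ne' (add_eq_left.1 one_add_sqrt_eq_one)

theorem not_isVirtuallyNilpotent_silverAffineGroup :
    ¬Group.IsVirtuallyNilpotent silverAffineGroup := by
  refine not_isVirtuallyNilpotent_of_affineMatrix_mem ?_ one_ne_zero
    (affineMatrix_mem_silverAffineGroup (Subgroup.mem_zpowers _) 0)
    (by simpa using affineMatrix_mem_silverAffineGroup (one_mem _) 1)
  rw [map_pow, isOfFinOrder_pow]
  simpa using not_isOfFinOrder_map_silverUnit

end SilverAffineGroup

/-- with `λ = (1+√2)²`, the set `R` of matrices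
`[[λ^n, a + b√2], [0, 1]]` (`n, a, b ∈ ℤ`) is a subgroup of `GL(2,ℝ)`, it is
solvable, and it is not virtually nilpotent. -/
theorem stmt_17 :
    ∃ Γ : Subgroup (Matrix.GeneralLinearGroup (Fin 2) ℝ),
      ((fun g : Matrix.GeneralLinearGroup (Fin 2) ℝ =>
          (g : Matrix (Fin 2) (Fin 2) ℝ)) '' (Γ : Set (Matrix.GeneralLinearGroup (Fin 2) ℝ)) =
        {M : Matrix (Fin 2) (Fin 2) ℝ | ∃ n a b : ℤ,
          M = !![((1 + Real.sqrt 2) ^ 2) ^ n, (a : ℝ) + (b : ℝ) * Real.sqrt 2; 0, 1]}) ∧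
      IsSolvable Γ ∧
      ¬ ∃ H : Subgroup Γ, H.FiniteIndex ∧ Group.IsNilpotent H := by
  refine ⟨silverAffineGroup, coe_image_silverAffineGroup, isSolvable_silverAffineGroup, ?_⟩
  rintro ⟨H, hindex, hnilpotent⟩
  exact not_isVirtuallyNilpotent_silverAffineGroup ⟨H, hnilpotent, hindex⟩
end
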